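/- arXiv:1803.11435 — 3 statements merged into one kernel-verified Lean document; each statement's English description precedes it below -/
import Mathlib

section
/- Assume the heat kernel has the exponential form p(t,x,y) = C₁ t^{-d/α} exp(-(C₂ ρ(x,y) t^{-1/α})^{α/(α-1)}) with constants d, C₁, C₂ > 0 and α ≥ 2. Then, as ρ(x,y)^{-α/β} t → 0, the inverse-subordinated kernel satisfies p^{S^{-1}}(t,x,y) ∼ K₁ ρ(x,y)^{-d(1-β)/(α-β)} t^{-d(α-1)β/(α(α-β))} exp(-K₂ ρ(x,y)^{α/(α-β)} t^{-β/(α-β)}), where K₁ = C₁ C₂^{-d(1-β)/(α-β)} √((α-1)/((α-β)β)) (α-1)^{d(α-1)(1-β)/(α(α-β))} β^{d(α-1)β/(α(α-β))} and K₂ = C₂^{α/(α-β)} (α-β) (α-1)^{-(α-1)/(α-β)} β^{β/(α-β)}; here '∼ as ρ(x,y)^{-α/β} t → 0' means: for every ε > 0 there exists δ > 0 such that whenever t > 0, x ≠ y ∈ M and ρ(x,y)^{-α/β} t ≤ δ, the ratio of the two sides lies within ε of 1. -/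
/-!
After rescaling `s` by the point where the integrand concentrates, the time-changed kernel is an
explicit factor times `I_n = ∫ y ^ a * exp (-(n / b) * y ^ b) dP_n(y)`, with `b = β / (α - 1) < 1`,
`a = β d / α`, a large parameter `n`, and `P_n` the rescaled stable law, characterized by
`∫ exp (-n v y) dP_n(y) = exp (-(n / β) * v ^ β)`.

No information on the density of the stable law is needed. Let `p = b / (1 - b)`, so that
`v ^ (-p) / p` is the Legendre dual of `y ^ b / b`. For a suitable exponent `M`, the mixture of
exponentials `G_n(y) = √n ∫ v ^ (M - 1) * exp (-n v y - n v ^ (-p) / p) dv` equals, by scaling,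
`y ^ a * exp (-(n / b) * y ^ b)` times a function of `n * y ^ b` alone (`mixture_eq`). That function
is a one-dimensional Laplace integral, so it tends to `√(2π / (1 + p))` (`tendsto_laplaceInt`).
Hence `G_n` approximates the integrand up to a constant, except where `n * y ^ b` is bounded, a
region whose contribution is exponentially negligible (`abs_sub_mixture_le`). On the other hand
Fubini gives
`∫ G_n dP_n = √n ∫ v ^ (M - 1) * exp (-n (v ^ β / β + v ^ (-p) / p)) dv` (`integral_mixture`), to
which the same Laplace asymptotics apply, with limit constant `√(2π / (β + p))`. Dividing yields
`I_n ∼ √((1 + p) / (β + p)) * exp (-n (1 / β + 1 / p))` (`stable_laplace`), and unwinding the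
scaling gives the stated constants (`scaled_kernel_eq`, `asymptotic_eq`).

All Laplace integrals are written in the variable `x = log v`, where scaling is translation and
the phase has a global quadratic lower bound.
-/

open MeasureTheory Set
open Filter Topology

/-! ### Laplace's method -/

/-- The Laplace phase `(v^κ - 1)/κ + (v^(-p) - 1)/p` in the coordinate `x = log v`; its
unique minimum is the value `0` at the origin, where the second derivative is `κ + p`. -/
noncomputable def phase (κ p x : ℝ) : ℝ :=
  (Real.exp (κ * x) - 1) / κ + (Real.exp (-(p * x)) - 1) / p

/-- The Laplace integral of `phase κ p` at large parameter `N`, with weight `exp (M x)` and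
normalized by `√N` so that it has a nonzero limit. -/
noncomputable def laplaceInt (M κ p N : ℝ) : ℝ :=
  √N * ∫ x : ℝ, Real.exp (M * x) * Real.exp (-(N * phase κ p x))

/-- A quadratic lower bound valid on the whole line: for each sign of `x`, one of the two
exponentials supplies the quadratic term and the other is bounded below by its tangent. -/
lemma phase_lower {κ p : ℝ} (hκ : 0 < κ) (hp : 0 < p) (x : ℝ) :
    min κ p / 2 * x ^ 2 ≤ phase κ p x := by
  have key : ∀ a b y : ℝ, 0 < a → 0 < b → 0 ≤ y →
      min a b / 2 * y ^ 2 ≤ (Real.exp (a * y) - 1) / a + (Real.exp (-(b * y)) - 1) / b := by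
    intro a b y ha hb hy
    have h1 := Real.quadratic_le_exp_of_nonneg (mul_nonneg ha.le hy)
    have h2 := Real.add_one_le_exp (-(b * y))
    have h3 : y + a / 2 * y ^ 2 ≤ (Real.exp (a * y) - 1) / a := by
      rw [le_div_iff₀ ha]; nlinarith
    have h4 : -y ≤ (Real.exp (-(b * y)) - 1) / b := by
      rw [le_div_iff₀ hb]; nlinarith
    have h5 : min a b / 2 * y ^ 2 ≤ a / 2 * y ^ 2 := by
      gcongr; exact min_le_left _ _
    linarith
  rcases le_total 0 x with hx | hx
  · exact key κ p x hκ hp hx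
  · have := key p κ (-x) hp hκ (by linarith)
    rw [min_comm] at this
    unfold phase
    simp only [mul_neg, neg_neg, even_two, Even.neg_pow] at this
    linarith

lemma phase_bound (κ p : ℝ) (hκ : 0 < κ) (hp : 0 < p) (x : ℝ)
    (h1 : κ * |x| ≤ 1) (h2 : p * |x| ≤ 1) :
    |phase κ p x - (κ + p) / 2 * x ^ 2| ≤ (κ ^ 2 + p ^ 2) * |x| ^ 3 := by
  have e : ∀ y : ℝ, |y| ≤ 1 → |Real.exp y - 1 - y - y ^ 2 / 2| ≤ |y| ^ 3 := by
    intro y hy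
    have := Real.exp_bound hy (n := 3) (by norm_num)
    norm_num [Finset.sum_range_succ, Nat.factorial] at this
    have h3 : 0 ≤ |y| ^ 3 := by positivity
    calc _ = |Real.exp y - (1 + y + y ^ 2 / 2)| := by ring_nf
      _ ≤ _ := by linarith
  have a1 := e (κ * x) (by rwa [abs_mul, abs_of_pos hκ])
  have a2 := e (-(p * x)) (by rwa [abs_neg, abs_mul, abs_of_pos hp])
  rw [abs_mul, abs_of_pos hκ] at a1
  rw [abs_neg (p * x), abs_mul, abs_of_pos hp] at a2
  have b1 := div_le_div_of_nonneg_right a1 hκ.le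
  have b2 := div_le_div_of_nonneg_right a2 hp.le
  rw [← abs_of_pos hκ, ← abs_div, abs_of_pos hκ] at b1
  rw [← abs_of_pos hp, ← abs_div, abs_of_pos hp] at b2
  calc _ = |(Real.exp (κ * x) - 1 - κ * x - (κ * x) ^ 2 / 2) / κ +
        (Real.exp (-(p * x)) - 1 - (-(p * x)) - (-(p * x)) ^ 2 / 2) / p| := by
        unfold phase; congr 1; field_simp; ring
    _ ≤ _ := abs_add_le _ _
    _ ≤ _ := add_le_add b1 b2
    _ = _ := by field_simp

/-- Completing the square: a linear tilt with slope at most `|M|` costs only a constant and half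
of the Gaussian weight. -/
lemma tilt_bound {M c h w : ℝ} (hc : 0 < c) (hh : |h| ≤ 1) :
    M * (h * w) - c * w ^ 2 ≤ M ^ 2 / (2 * c) - c / 2 * w ^ 2 := by
  have h1 : M * (h * w) ≤ (M * h) ^ 2 / (2 * c) + c / 2 * w ^ 2 := by
    have : 0 ≤ (M * h - c * w) ^ 2 / (2 * c) := by positivity
    have e : (M * h - c * w) ^ 2 / (2 * c)
        = (M * h) ^ 2 / (2 * c) + c / 2 * w ^ 2 - M * (h * w) := by field_simp; ring
    linarith
  have h2 : (M * h) ^ 2 / (2 * c) ≤ M ^ 2 / (2 * c) := by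
    refine div_le_div_of_nonneg_right ?_ (by positivity)
    rw [mul_pow]
    have : h ^ 2 ≤ 1 := by rw [← sq_abs]; exact pow_le_one₀ (abs_nonneg _) hh
    nlinarith [sq_nonneg M]
  linarith

lemma continuous_phase (κ p : ℝ) : Continuous (phase κ p) := by
  unfold phase; fun_prop

lemma integrable_phase (M : ℝ) {κ p N : ℝ} (hκ : 0 < κ) (hp : 0 < p) (hN : 0 < N) :
    Integrable fun x : ℝ => Real.exp (M * x) * Real.exp (-(N * phase κ p x)) := by
  have hc : 0 < N * (min κ p / 2) := by have := lt_min hκ hp; positivity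
  set c := N * (min κ p / 2) with hcdef
  refine ((integrable_exp_neg_mul_sq (half_pos hc)).const_mul
    (Real.exp (M ^ 2 / (2 * c)))).mono' ?_ ?_
  · have := continuous_phase κ p
    exact (by fun_prop : Continuous _).aestronglyMeasurable
  · filter_upwards with x
    rw [Real.norm_of_nonneg (by positivity), ← Real.exp_add, ← Real.exp_add]
    apply Real.exp_le_exp.2
    have h1 := tilt_bound (M := M) (h := 1) (w := x) hc (by simp)
    have h2 := mul_le_mul_of_nonneg_left (phase_lower hκ hp x) hN.le
    rw [← mul_assoc, ← hcdef] at h2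
    rw [one_mul] at h1
    linarith

/-- Laplace's method for `phase`: substitute `x = w / √N` and use dominated convergence. -/
lemma tendsto_laplaceInt (M : ℝ) {κ p : ℝ} (hκ : 0 < κ) (hp : 0 < p) :
    Tendsto (laplaceInt M κ p) atTop (𝓝 √(2 * Real.pi / (κ + p))) := by
  have hc : 0 < min κ p / 2 := by have := lt_min hκ hp; positivity
  set c := min κ p / 2 with hcdef
  have hsq : Tendsto (fun N : ℝ => (√N)⁻¹) atTop (𝓝 0) :=
    tendsto_inv_atTop_zero.comp Real.tendsto_sqrt_atTop
  have hsub : ∀ᶠ N : ℝ in atTop, ∫ w : ℝ, Real.exp (M * ((√N)⁻¹ * w)) *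
      Real.exp (-(N * phase κ p ((√N)⁻¹ * w))) = laplaceInt M κ p N := by
    filter_upwards [eventually_gt_atTop 0] with N hN
    have := Measure.integral_comp_mul_left
      (fun x => Real.exp (M * x) * Real.exp (-(N * phase κ p x))) ((√N)⁻¹)
    rw [this, inv_inv, abs_of_nonneg (Real.sqrt_nonneg _), smul_eq_mul]
    rfl
  have hgauss : ∫ w : ℝ, Real.exp (-((κ + p) / 2) * w ^ 2) = √(2 * Real.pi / (κ + p)) := by
    rw [integral_gaussian]; congr 1; field_simp
  rw [← hgauss]
  refine Tendsto.congr' hsub ?_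
  refine tendsto_integral_filter_of_dominated_convergence
    (fun w => Real.exp (M ^ 2 / (2 * c)) * Real.exp (-(c / 2) * w ^ 2)) ?_ ?_
    ((integrable_exp_neg_mul_sq (half_pos hc)).const_mul _) ?_
  · filter_upwards with N
    have := continuous_phase κ p
    exact (by fun_prop : Continuous _).aestronglyMeasurable
  · filter_upwards [eventually_ge_atTop 1] with N hN
    filter_upwards with w
    have hN0 : 0 < N := by linarith
    rw [Real.norm_of_nonneg (by positivity), ← Real.exp_add, ← Real.exp_add]
    apply Real.exp_le_exp.2
    have hs : |(√N)⁻¹| ≤ 1 := by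
      rw [abs_of_nonneg (by positivity)]
      exact inv_le_one_of_one_le₀ (Real.one_le_sqrt.2 hN)
    have h1 := tilt_bound (M := M) (w := w) hc hs
    have h2 := mul_le_mul_of_nonneg_left (phase_lower hκ hp ((√N)⁻¹ * w)) hN0.le
    have h3 : N * (c * ((√N)⁻¹ * w) ^ 2) = c * w ^ 2 := by
      rw [mul_pow, inv_pow, Real.sq_sqrt hN0.le]; field_simp
    rw [← hcdef, h3] at h2
    linarith
  · filter_upwards with w
    have h1 : Tendsto (fun N : ℝ => Real.exp (M * ((√N)⁻¹ * w))) atTop (𝓝 1) := by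
      have : Tendsto (fun N : ℝ => M * ((√N)⁻¹ * w)) atTop (𝓝 (M * (0 * w))) :=
        (hsq.mul_const w).const_mul M
      simpa [Function.comp_def] using (Real.continuous_exp.tendsto _).comp this
    have h2 : Tendsto (fun N : ℝ => N * phase κ p ((√N)⁻¹ * w)) atTop
        (𝓝 ((κ + p) / 2 * w ^ 2)) := by
      rw [tendsto_iff_norm_sub_tendsto_zero]
      have hb : Tendsto (fun N : ℝ => (κ ^ 2 + p ^ 2) * |w| ^ 3 * (√N)⁻¹) atTop (𝓝 0) := by
        simpa using hsq.const_mul ((κ ^ 2 + p ^ 2) * |w| ^ 3)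
      refine squeeze_zero' (Eventually.of_forall fun _ => norm_nonneg _) ?_ hb
      have hz : ∀ q : ℝ, ∀ᶠ N : ℝ in atTop, q * |(√N)⁻¹ * w| ≤ 1 := by
        intro q
        have : Tendsto (fun N : ℝ => q * |(√N)⁻¹ * w|) atTop (𝓝 (q * |0 * w|)) :=
          ((hsq.mul_const w).abs).const_mul q
        rw [zero_mul, abs_zero, mul_zero] at this
        filter_upwards [this.eventually (eventually_lt_nhds zero_lt_one)] with N h using h.le
      filter_upwards [hz κ, hz p, eventually_gt_atTop 0] with N hN1 hN2 hN
      have hb := phase_bound κ p hκ hp _ hN1 hN2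
      have hs : √N ^ 2 = N := Real.sq_sqrt hN.le
      have hs0 : 0 < √N := Real.sqrt_pos.2 hN
      have e1 : N * phase κ p ((√N)⁻¹ * w) - (κ + p) / 2 * w ^ 2
          = N * (phase κ p ((√N)⁻¹ * w) - (κ + p) / 2 * ((√N)⁻¹ * w) ^ 2) := by
        rw [mul_pow, inv_pow, hs]; field_simp
      rw [e1, Real.norm_eq_abs, abs_mul, abs_of_pos hN]
      refine (mul_le_mul_of_nonneg_left hb hN.le).trans (le_of_eq ?_)
      rw [abs_mul, abs_of_pos (inv_pos.2 hs0)]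
      nth_rewrite 1 [← hs]
      field_simp
    have h3 := h1.mul ((Real.continuous_exp.tendsto _).comp h2.neg)
    simpa using h3

/-! ### Mixtures of exponentials -/

/-- A superposition of the exponentials `y ↦ exp (-n v y)` over `v = exp x`, with a weight built
from the Legendre dual `v ^ (-p) / p` of `y ^ b / b`, where `p = b / (1 - b)`. -/
noncomputable def mixture (M p n y : ℝ) : ℝ :=
  √n * ∫ x : ℝ, Real.exp (M * x) * Real.exp (-(n * (Real.exp x * y + Real.exp (-(p * x)) / p)))

/-- The mixture reproduces `y ^ a * exp (-(n / b) * y ^ b)` up to a Laplace integral that depends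
only on `n * y ^ b`: translating `x` by `(b - 1) * log y` extracts all powers of `y`. -/
lemma mixture_eq {a b p M n y : ℝ} (hp : 0 < p) (hpb : p * (1 - b) = b)
    (hb : b ≠ 0) (hM : M * (b - 1) = a + b / 2) (hn : 0 < n) (hy : 0 < y) :
    mixture M p n y = y ^ a * Real.exp (-(n / b * y ^ b)) * laplaceInt M 1 p (n * y ^ b) := by
  obtain ⟨h, rfl⟩ : ∃ h, y = Real.exp h := ⟨Real.log y, (Real.exp_log hy).symm⟩
  rw [← Real.exp_mul, ← Real.exp_mul]
  unfold mixture laplaceInt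
  rw [← integral_add_right_eq_self _ ((b - 1) * h), ← integral_const_mul, ← integral_const_mul,
    ← integral_const_mul]
  congr 1
  funext x
  have hsq : √(n * Real.exp (h * b)) = √n * Real.exp (h * b / 2) := by
    rw [Real.sqrt_mul hn.le, Real.exp_half]
  have e1 : Real.exp (x + (b - 1) * h) * Real.exp h = Real.exp (h * b) * Real.exp x := by
    rw [← Real.exp_add, ← Real.exp_add]; ring_nf
  have e2 : Real.exp (-(p * (x + (b - 1) * h))) = Real.exp (h * b) * Real.exp (-(p * x)) := by
    rw [← Real.exp_add]; congr 1
    linear_combination h * hpb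
  have e3 : Real.exp (M * (x + (b - 1) * h)) =
      Real.exp (h * a) * Real.exp (h * b / 2) * Real.exp (M * x) := by
    rw [← Real.exp_add, ← Real.exp_add]; congr 1
    linear_combination h * hM
  have e4 : Real.exp (-(n * (Real.exp (h * b) * Real.exp x + Real.exp (h * b) *
      Real.exp (-(p * x)) / p))) = Real.exp (-(n / b * Real.exp (h * b))) *
      Real.exp (-(n * Real.exp (h * b) * phase 1 p x)) := by
    rw [← Real.exp_add (-(n / b * Real.exp (h * b)))]; congr 1
    have : 1 / b = 1 + 1 / p := by
      field_simp
      linear_combination hpb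
    have h2 : n / b = n * (1 + 1 / p) := by rw [← this]; ring
    rw [h2]; unfold phase; field_simp; ring
  rw [e1, e2, e3, e4, hsq]
  ring

lemma integrable_exp_neg_exp {M p : ℝ} (hM : M < 0) (hp : 0 < p) :
    Integrable fun x : ℝ => Real.exp (M * x) * Real.exp (-(Real.exp (-(p * x)) / p)) := by
  rw [← integrableOn_univ, ← Set.Iic_union_Ioi (a := (0:ℝ))]
  have hm : ∀ s : Set ℝ, AEStronglyMeasurable
      (fun x : ℝ => Real.exp (M * x) * Real.exp (-(Real.exp (-(p * x)) / p)))
      (volume.restrict s) := fun s =>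
    (by fun_prop : Continuous _).aestronglyMeasurable
  refine IntegrableOn.union ?_ ?_
  · refine (((integrable_exp_neg_mul_sq (half_pos (half_pos hp))).const_mul
      (Real.exp ((M + 1) ^ 2 / (2 * (p / 2))))).integrableOn).mono' (hm _) ?_
    refine (ae_restrict_mem measurableSet_Iic).mono fun x hx => ?_
    rw [Real.norm_of_nonneg (by positivity), ← Real.exp_add, ← Real.exp_add]
    apply Real.exp_le_exp.2
    have hx' : x ≤ 0 := hx
    have h0 := Real.quadratic_le_exp_of_nonneg (x := -(p * x)) (by nlinarith)
    have h1 : -x + p / 2 * x ^ 2 ≤ Real.exp (-(p * x)) / p := by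
      rw [le_div_iff₀ hp]; nlinarith
    have h2 := tilt_bound (M := M + 1) (h := 1) (w := x) (half_pos hp) (by simp)
    rw [one_mul] at h2
    linarith
  · refine (integrableOn_exp_mul_Ioi hM 0).mono' (hm _) ?_
    filter_upwards with x
    rw [Real.norm_of_nonneg (by positivity)]
    refine mul_le_of_le_one_right (by positivity) ?_
    rw [Real.exp_le_one_iff]
    have : 0 < Real.exp (-(p * x)) / p := by positivity
    linarith

/-- A bound on the mixture uniform in `y`, used near `y = 0`, where `n * y ^ b` is not large. -/
lemma mixture_le {M p n y : ℝ} (hM : M < 0) (hp : 0 < p) (hn : 1 ≤ n) (hy : 0 < y) :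
    mixture M p n y ≤
      √n * ∫ x : ℝ, Real.exp (M * x) * Real.exp (-(Real.exp (-(p * x)) / p)) := by
  unfold mixture
  refine mul_le_mul_of_nonneg_left ?_ (Real.sqrt_nonneg _)
  refine integral_mono_of_nonneg (Eventually.of_forall fun x => by positivity)
    (integrable_exp_neg_exp hM hp) (Eventually.of_forall fun x => ?_)
  dsimp only
  refine mul_le_mul_of_nonneg_left (Real.exp_le_exp.2 (neg_le_neg ?_)) (Real.exp_pos _).le
  have h1 : 0 < Real.exp (-(p * x)) / p := by positivity
  have h2 : 0 < n * (Real.exp x * y) := by positivity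
  nlinarith

/-- By Fubini, integrating the mixture uses only the Laplace transform of `P`, and gives another
Laplace integral of the same family. -/
lemma integral_mixture (M : ℝ) {β p n : ℝ} (hβ : 0 < β) (hp : 0 < p) (hn : 0 < n)
    (P : Measure ℝ) [IsProbabilityMeasure P]
    (hP : ∀ v : ℝ, 0 < v →
      ∫ y in Ioi (0:ℝ), Real.exp (-(n * v * y)) ∂P = Real.exp (-(n / β * v ^ β))) :
    Integrable (mixture M p n) (P.restrict (Ioi 0)) ∧
    ∫ y in Ioi (0:ℝ), mixture M p n y ∂P =
      Real.exp (-(n * (1 / β + 1 / p))) * laplaceInt M β p n := by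
  set f : ℝ → ℝ → ℝ := fun y x =>
    Real.exp (M * x) * Real.exp (-(n * (Real.exp x * y + Real.exp (-(p * x)) / p))) with hf
  have hsplit : ∀ y x, f y x = Real.exp (M * x) * Real.exp (-(n * (Real.exp (-(p * x)) / p))) *
      Real.exp (-(n * Real.exp x * y)) := by
    intro y x
    simp only [hf]
    rw [mul_assoc, ← Real.exp_add (-(n * (Real.exp (-(p * x)) / p)))]
    ring_nf
  have hin : ∀ x, ∫ y in Ioi (0:ℝ), f y x ∂P = Real.exp (-(n * (1 / β + 1 / p))) *
      (Real.exp (M * x) * Real.exp (-(n * phase β p x))) := by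
    intro x
    simp_rw [hsplit]
    rw [integral_const_mul, hP _ (Real.exp_pos x), ← Real.exp_mul, mul_assoc,
      mul_left_comm (Real.exp (-(n * (1 / β + 1 / p)))),
      ← Real.exp_add (-(n * (Real.exp (-(p * x)) / p))),
      ← Real.exp_add (-(n * (1 / β + 1 / p)))]
    congr 2
    unfold phase
    rw [mul_comm x β]
    field_simp
    ring
  have hint : Integrable (Function.uncurry f) ((P.restrict (Ioi 0)).prod volume) := by
    rw [integrable_prod_iff']
    · constructor
      · filter_upwards with x
        refine Integrable.mono' (integrable_const (Real.exp (M * x)))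
          (by simp only [hf, Function.uncurry]
              exact (by fun_prop : Continuous _).aestronglyMeasurable) ?_
        refine (ae_restrict_mem measurableSet_Ioi).mono fun y hy => ?_
        have hy' : 0 < y := hy
        simp only [hf, Function.uncurry]
        rw [Real.norm_of_nonneg (by positivity)]
        refine mul_le_of_le_one_right (by positivity) ?_
        rw [Real.exp_le_one_iff]
        have : 0 < n * (Real.exp x * y + Real.exp (-(p * x)) / p) := by positivity
        linarith
      · have hnorm : ∀ x y, ‖Function.uncurry f (y, x)‖ = f y x := by
          intro x y
          exact Real.norm_of_nonneg (by simp only [hf, Function.uncurry]; positivity)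
        simp_rw [hnorm, hin]
        exact (integrable_phase M hβ hp hn).const_mul _
    · have : Continuous (Function.uncurry f) := by
        simp only [hf, Function.uncurry_def]; fun_prop
      exact this.aestronglyMeasurable
  refine ⟨hint.integral_prod_left.const_mul (√n), ?_⟩
  unfold mixture
  rw [integral_const_mul, integral_integral_swap hint]
  simp_rw [hin]
  rw [integral_const_mul]
  unfold laplaceInt
  ring

/-- The mixture approximates `J * y ^ a * exp (-(n / b) * y ^ b)` with relative error `η` where
`n * y ^ b ≥ A`. Elsewhere both functions are bounded, and the indicator of `n * y ^ b < A` is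
dominated by a multiple of `exp (-n V y)`, whose integral is also known. -/
lemma abs_sub_mixture_le {a b p M J A η V : ℝ} (ha : 0 < a) (hb : 0 < b) (hb1 : b < 1)
    (hp : 0 < p) (hpb : p * (1 - b) = b) (hM : M * (b - 1) = a + b / 2) (hM0 : M < 0)
    (hJ0 : 0 < J) (hη0 : 0 < η) (hV0 : 0 < V) (hA1 : 1 ≤ A)
    (hA : ∀ N, A ≤ N → |J - laplaceInt M 1 p N| ≤ η * laplaceInt M 1 p N)
    {n y : ℝ} (hn : A ≤ n) (hy : 0 < y) :
    |J * (y ^ a * Real.exp (-(n / b * y ^ b))) - mixture M p n y| ≤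
      η * mixture M p n y +
        (J + √n * ∫ x : ℝ, Real.exp (M * x) * Real.exp (-(Real.exp (-(p * x)) / p))) *
          Real.exp (V * A ^ (1 / b)) * Real.exp (-(n * V * y)) := by
  have hK0 : 0 ≤ ∫ x : ℝ, Real.exp (M * x) * Real.exp (-(Real.exp (-(p * x)) / p)) :=
    integral_nonneg fun x => by positivity
  have hn1 : 1 ≤ n := hA1.trans hn
  have hmixK := mixture_le hM0 hp hn1 hy
  revert hK0 hmixK
  generalize (∫ x : ℝ, Real.exp (M * x) * Real.exp (-(Real.exp (-(p * x)) / p))) = K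
  intro hK0 hmixK
  have hn0 : 0 < n := by linarith
  have hmix0 : 0 ≤ mixture M p n y := by
    unfold mixture
    exact mul_nonneg (Real.sqrt_nonneg _) (integral_nonneg fun x => by positivity)
  rcases le_or_gt A (n * y ^ b) with h | h
  · have h1 := hA _ h
    rw [mixture_eq hp hpb hb.ne' hM hn0 hy]
    set F := y ^ a * Real.exp (-(n / b * y ^ b)) with hF
    have hF0 : 0 ≤ F := by positivity
    have h2 : 0 ≤ (J + √n * K) * Real.exp (V * A ^ (1 / b)) * Real.exp (-(n * V * y)) := by positivity
    have h3 : J * F - F * laplaceInt M 1 p (n * y ^ b) =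
      F * (J - laplaceInt M 1 p (n * y ^ b)) := by ring
    rw [h3, abs_mul, abs_of_nonneg hF0]
    nlinarith [mul_le_mul_of_nonneg_left h1 hF0]
  -- Here `n * y ^ b < A ≤ n`, so `y ≤ 1`, and `b < 1` keeps `n * y` below `A ^ (1 / b)`.
  · have hy1 : y ≤ 1 := by
      by_contra hcon
      push Not at hcon
      have : 1 ≤ y ^ b := Real.one_le_rpow hcon.le hb.le
      nlinarith
    have hF1 : y ^ a * Real.exp (-(n / b * y ^ b)) ≤ 1 := by
      refine mul_le_one₀ (Real.rpow_le_one hy.le hy1 ha.le) (by positivity) ?_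
      rw [Real.exp_le_one_iff]
      have : 0 < n / b * y ^ b := by positivity
      linarith
    have hF0 : 0 ≤ y ^ a * Real.exp (-(n / b * y ^ b)) := by positivity
    have hny : n * y ≤ A ^ (1 / b) := by
      have hb' : (A ^ (1 / b)) ^ b = A := by
        rw [← Real.rpow_mul (by linarith), one_div_mul_cancel hb.ne', Real.rpow_one]
      rw [← Real.rpow_le_rpow_iff (by positivity) (by positivity) hb, hb',
        Real.mul_rpow hn0.le hy.le]
      have h5 : n ^ b ≤ n := Real.rpow_le_self_of_one_le hn1 hb1.le
      have h6 : 0 < y ^ b := by positivity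
      nlinarith
    have hone : 1 ≤ Real.exp (V * A ^ (1 / b)) * Real.exp (-(n * V * y)) := by
      rw [← Real.exp_add]
      apply Real.one_le_exp
      nlinarith
    have hJK : 0 ≤ J + √n * K := by positivity
    have h1 : |J * (y ^ a * Real.exp (-(n / b * y ^ b))) - mixture M p n y| ≤ J + √n * K := by
      rw [abs_le]; constructor <;> nlinarith
    have h2 := mul_le_mul_of_nonneg_left hone hJK
    nlinarith [mul_nonneg hη0.le hmix0]

/-- Sharp asymptotics of `∫ y ^ a * exp (-(n / b) * y ^ b) dP`, uniform over the laws `P` whose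
Laplace transform at `n * v` is `exp (-(n / β) * v ^ β)`. -/
lemma stable_laplace {a b β p : ℝ} (ha : 0 < a) (hb : 0 < b) (hb1 : b < 1) (hβ : 0 < β)
    (hpb : p * (1 - b) = b) {ε : ℝ} (hε : 0 < ε) :
    ∃ N₀ : ℝ, 0 < N₀ ∧ ∀ n : ℝ, N₀ ≤ n → ∀ P : Measure ℝ, IsProbabilityMeasure P →
      (∀ v : ℝ, 0 < v →
        ∫ y in Ioi (0:ℝ), Real.exp (-(n * v * y)) ∂P = Real.exp (-(n / β * v ^ β))) →
      |(∫ y in Ioi (0:ℝ), y ^ a * Real.exp (-(n / b * y ^ b)) ∂P) *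
        Real.exp (n * (1 / β + 1 / p)) * √((β + p) / (1 + p)) - 1| ≤ ε := by
  have hp : 0 < p := by
    by_contra h
    nlinarith
  obtain ⟨M, hM⟩ : ∃ M : ℝ, M * (b - 1) = a + b / 2 :=
    ⟨(a + b / 2) / (b - 1), div_mul_cancel₀ _ (by linarith)⟩
  have hM0 : M < 0 := by
    by_contra h
    nlinarith
  set Φ := 1 / β + 1 / p with hΦ
  have hΦ0 : 0 < Φ := by positivity
  set J := √(2 * Real.pi / (1 + p)) with hJ
  set J' := √(2 * Real.pi / (β + p)) with hJ'
  have hJ0 : 0 < J := Real.sqrt_pos.2 (by positivity)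
  have hJ'0 : 0 < J' := Real.sqrt_pos.2 (by positivity)
  have hJJ : √((β + p) / (1 + p)) = J / J' := by
    rw [hJ, hJ', ← Real.sqrt_div (by positivity)]
    congr 1; field_simp
  set K := ∫ x : ℝ, Real.exp (M * x) * Real.exp (-(Real.exp (-(p * x)) / p)) with hK
  have hK0 : 0 ≤ K := integral_nonneg fun x => by positivity
  set η := ε / 2 with hη
  have hη0 : 0 < η := half_pos hε
  obtain ⟨A, hA1, hA⟩ : ∃ A : ℝ, 1 ≤ A ∧ ∀ N, A ≤ N →
      |J - laplaceInt M 1 p N| ≤ η * laplaceInt M 1 p N := by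
    have t := tendsto_laplaceInt M one_pos hp
    have t2 : Tendsto (fun N => η * laplaceInt M 1 p N - |J - laplaceInt M 1 p N|) atTop
        (𝓝 (η * J - |J - J|)) := (t.const_mul η).sub (t.const_sub J).abs
    rw [sub_self, abs_zero, sub_zero] at t2
    obtain ⟨A, hA⟩ := eventually_atTop.1
      (t2.eventually (eventually_gt_nhds (mul_pos hη0 hJ0)))
    exact ⟨max A 1, le_max_right _ _, fun N hN => by
      have := hA N ((le_max_left _ _).trans hN); linarith⟩
  -- This `V` makes the integral of `exp (-n V y)` equal to `exp (-n (Φ + 1))`, which is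
  -- exponentially smaller than the leading term `exp (-n Φ)`.
  set V := (β * (Φ + 1)) ^ (1 / β) with hV
  have hV0 : 0 < V := by positivity
  have hVβ : V ^ β = β * (Φ + 1) := by
    rw [hV, ← Real.rpow_mul (by positivity), one_div_mul_cancel hβ.ne', Real.rpow_one]
  set C := Real.exp (V * A ^ (1 / b)) with hC
  have hpt : ∀ n, A ≤ n → ∀ y, 0 < y →
      |J * (y ^ a * Real.exp (-(n / b * y ^ b))) - mixture M p n y| ≤
        η * mixture M p n y + (J + √n * K) * C * Real.exp (-(n * V * y)) :=
    fun n hn y hy => abs_sub_mixture_le ha hb hb1 hp hpb hM hM0 hJ0 hη0 hV0 hA1 hA hn hy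
  set R : ℝ → ℝ := fun n => |laplaceInt M β p n - J'| + η * laplaceInt M β p n +
    (J + √n * K) * C * Real.exp (-n) with hR
  have hRlim : Tendsto R atTop (𝓝 (η * J')) := by
    have t := tendsto_laplaceInt M hβ hp
    have t1 : Tendsto (fun n : ℝ => Real.exp (-n)) atTop (𝓝 0) :=
      Real.tendsto_exp_neg_atTop_nhds_zero
    have t2 : Tendsto (fun n : ℝ => √n * Real.exp (-n)) atTop (𝓝 0) := by
      have := Real.tendsto_pow_mul_exp_neg_atTop_nhds_zero 1
      refine squeeze_zero' (Eventually.of_forall fun n => by positivity) ?_ this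
      filter_upwards [eventually_ge_atTop 1] with n hn
      gcongr
      rw [pow_one]
      rw [Real.sqrt_le_left (by linarith)]; nlinarith
    have t3 := (((t.sub_const J').abs).add (t.const_mul η)).add
      ((t1.const_mul (J * C)).add (t2.const_mul (K * C)))
    rw [← hJ'] at t3
    simp only [sub_self, abs_zero, mul_zero, add_zero, zero_add] at t3
    refine t3.congr fun n => ?_
    simp only [hR]; ring
  obtain ⟨N₁, hN₁⟩ := eventually_atTop.1 (hRlim.eventually (eventually_lt_nhds
    (show η * J' < ε * J' by rw [hη]; nlinarith)))
  refine ⟨max A N₁, lt_of_lt_of_le (by linarith) (le_max_left _ _), ?_⟩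
  intro n hn P hPprob hP
  have hnA : A ≤ n := (le_max_left _ _).trans hn
  have hn0 : 0 < n := by linarith
  have hRn := hN₁ n ((le_max_right _ _).trans hn)
  obtain ⟨hmi, hmix⟩ := integral_mixture M hβ hp hn0 P hP
  rw [← hΦ] at hmix
  have hE := hP V hV0
  have hEi : Integrable (fun y => Real.exp (-(n * V * y))) (P.restrict (Ioi 0)) := by
    by_contra hcon
    rw [integral_undef hcon] at hE
    exact (Real.exp_pos _).ne hE
  set F : ℝ → ℝ := fun y => y ^ a * Real.exp (-(n / b * y ^ b)) with hF
  have hae : ∀ᵐ y ∂(P.restrict (Ioi 0)), ‖J * F y - mixture M p n y‖ ≤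
      η * mixture M p n y + (J + √n * K) * C * Real.exp (-(n * V * y)) :=
    (ae_restrict_mem measurableSet_Ioi).mono fun y hy => hpt n hnA y hy
  have hbi := (hmi.const_mul η).add (hEi.const_mul ((J + √n * K) * C))
  have hFm : Measurable F := by simp only [hF]; fun_prop
  have hdi : Integrable (fun y => J * F y - mixture M p n y) (P.restrict (Ioi 0)) :=
    hbi.mono' ((hFm.const_mul J).aestronglyMeasurable.sub hmi.aestronglyMeasurable) hae
  have hJF : Integrable (fun y => J * F y) (P.restrict (Ioi 0)) := by
    exact (hdi.add hmi).congr (Eventually.of_forall fun y => by simp)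
  have hle := norm_integral_le_of_norm_le hbi hae
  simp only [Pi.add_apply] at hle
  rw [integral_sub hJF hmi, integral_const_mul, integral_add (hmi.const_mul η)
    (hEi.const_mul _), integral_const_mul, integral_const_mul, hmix, hE, hVβ,
    Real.norm_eq_abs] at hle
  set I := ∫ y in Ioi (0:ℝ), F y ∂P with hI
  have hexp : Real.exp (-(n / β * (β * (Φ + 1)))) = Real.exp (-(n * Φ)) * Real.exp (-n) := by
    rw [← Real.exp_add]; congr 1; field_simp; ring
  rw [hexp] at hle
  have hee : Real.exp (n * Φ) * Real.exp (-(n * Φ)) = 1 := by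
    rw [← Real.exp_add]; simp
  have h1 : |J * I * Real.exp (n * Φ) - laplaceInt M β p n| ≤
      η * laplaceInt M β p n + (J + √n * K) * C * Real.exp (-n) := by
    have h2 := mul_le_mul_of_nonneg_left hle (Real.exp_pos (n * Φ)).le
    rw [← abs_of_pos (Real.exp_pos (n * Φ)), ← abs_mul, abs_of_pos (Real.exp_pos (n * Φ))] at h2
    calc _ = |Real.exp (n * Φ) * (J * I - Real.exp (-(n * Φ)) * laplaceInt M β p n)| := by
          congr 1; linear_combination laplaceInt M β p n * hee
      _ ≤ _ := h2
      _ = _ := by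
        linear_combination (η * laplaceInt M β p n + (J + √n * K) * C * Real.exp (-n)) * hee
  have h3 : |J * I * Real.exp (n * Φ) - J'| ≤ ε * J' := by
    have := abs_sub_le (J * I * Real.exp (n * Φ)) (laplaceInt M β p n) J'
    simp only [hR] at hRn
    linarith
  rw [hJJ]
  have h4 : I * Real.exp (n * Φ) * (J / J') - 1 = (J * I * Real.exp (n * Φ) - J') / J' := by
    field_simp
  rw [h4, abs_div, abs_of_pos hJ'0, div_le_iff₀ hJ'0]
  exact h3

/-! ### Scaling of the kernel -/

/-- The large parameter of the Laplace asymptotics, a constant times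
`(ρ ^ (-α / β) * t) ^ (-β / (α - β))`. For positive arguments it is
`β ^ (α/(α-β)) * (α-1) ^ (-(α-1)/(α-β)) * (C₂ ρ) ^ (α/(α-β)) * t ^ (-β/(α-β))`. -/
noncomputable def largeParam (α β C₂ t ρ : ℝ) : ℝ :=
  Real.exp ((α * Real.log β - (α - 1) * Real.log (α - 1) +
    α * (Real.log C₂ + Real.log ρ) - β * Real.log t) / (α - β))

lemma largeParam_pos (α β C₂ t ρ : ℝ) : 0 < largeParam α β C₂ t ρ := Real.exp_pos _

/-- The value of `s` at which the integrand concentrates: with `n` the large parameter, it is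
`n ^ (1 - 1/β) * β ^ (1/β)`. -/
noncomputable def scaleLen (α β C₂ t ρ : ℝ) : ℝ :=
  Real.exp (Real.log (largeParam α β C₂ t ρ) * (1 - 1 / β) + Real.log β / β)

/-- The integrand of the time-changed kernel in the rescaled variable `s / scaleLen`. -/
lemma scaled_kernel_eq {α β d C₁ C₂ t ρ s : ℝ} (hβ : 0 < β) (hα1 : 0 < α - 1) (hα : 0 < α)
    (hαβ : 0 < α - β) (hC₂ : 0 < C₂) (ht : 0 < t) (hρ : 0 < ρ) (hs : 0 < s) :
    C₁ * (t ^ β * s ^ (-β)) ^ (-(d / α)) *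
      Real.exp (-((C₂ * ρ * (t ^ β * s ^ (-β)) ^ (-(1 / α))) ^ (α / (α - 1)))) =
    C₁ * Real.exp (β * d / α * (Real.log (scaleLen α β C₂ t ρ) - Real.log t)) *
      ((s / scaleLen α β C₂ t ρ) ^ (β * d / α) *
        Real.exp (-(largeParam α β C₂ t ρ / (β / (α - 1)) *
          (s / scaleLen α β C₂ t ρ) ^ (β / (α - 1))))) := by
  have hL : 0 < scaleLen α β C₂ t ρ := Real.exp_pos _
  have h1 : 0 < t ^ β * s ^ (-β) := by positivity
  have hlog : Real.log (t ^ β * s ^ (-β)) = β * Real.log t - β * Real.log s := by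
    rw [Real.log_mul (by positivity) (by positivity), Real.log_rpow ht, Real.log_rpow hs]; ring
  have hdiv : 0 < s / scaleLen α β C₂ t ρ := by positivity
  have e1 : (t ^ β * s ^ (-β)) ^ (-(d / α)) =
      Real.exp (β * d / α * (Real.log (scaleLen α β C₂ t ρ) - Real.log t)) *
        (s / scaleLen α β C₂ t ρ) ^ (β * d / α) := by
    rw [Real.rpow_def_of_pos h1, Real.rpow_def_of_pos hdiv, hlog,
      Real.log_div hs.ne' hL.ne', ← Real.exp_add]
    congr 1; field_simp; ring
  have e2 : (C₂ * ρ * (t ^ β * s ^ (-β)) ^ (-(1 / α))) ^ (α / (α - 1)) =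
      largeParam α β C₂ t ρ / (β / (α - 1)) *
          (s / scaleLen α β C₂ t ρ) ^ (β / (α - 1)) := by
    have h2 : largeParam α β C₂ t ρ / (β / (α - 1)) = Real.exp
        (Real.log (largeParam α β C₂ t ρ) - Real.log β + Real.log (α - 1)) := by
      rw [Real.exp_add, Real.exp_sub, Real.exp_log hβ, Real.exp_log hα1,
        Real.exp_log (largeParam_pos α β C₂ t ρ)]
      field_simp
    have h3 : 0 < (t ^ β * s ^ (-β)) ^ (-(1 / α)) := by positivity
    rw [h2, Real.rpow_def_of_pos hdiv, Real.rpow_def_of_pos (by positivity),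
      Real.log_mul (by positivity) h3.ne', Real.log_mul hC₂.ne' hρ.ne', Real.log_rpow h1, hlog,
      Real.log_div hs.ne' hL.ne', ← Real.exp_add]
    congr 1
    unfold scaleLen largeParam
    rw [Real.log_exp, Real.log_exp]
    field_simp
    ring
  rw [e1, e2]; ring

/-- The claimed leading term, expressed through `largeParam` and `scaleLen`. -/
lemma asymptotic_eq {α β d C₁ C₂ t ρ p : ℝ} (hβ : 0 < β) (hα1 : 0 < α - 1) (hα : 0 < α)
    (hαβ : 0 < α - β) (hC₂ : 0 < C₂) (ht : 0 < t) (hρ : 0 < ρ) (hαβ₁ : 0 < α - 1 - β)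
    (hp : p = β / (α - 1 - β)) :
    (C₁ * C₂ ^ (-(d * (1 - β)/(α - β))) * Real.sqrt ((α - 1)/((α - β) * β)) *
            (α - 1) ^ (d * (α - 1) * (1 - β)/(α * (α - β))) *
            β ^ (d * (α - 1) * β/(α * (α - β)))) *
          ρ ^ (-(d * (1 - β)/(α - β))) * t ^ (-(d * (α - 1) * β/(α * (α - β)))) *
          Real.exp (-((C₂ ^ (α/(α - β)) * (α - β) * (α - 1) ^ (-((α - 1)/(α - β))) *
              β ^ (β/(α - β))) *
            ρ ^ (α/(α - β)) * t ^ (-(β/(α - β))))) =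
    C₁ * Real.exp (β * d / α * (Real.log (scaleLen α β C₂ t ρ) - Real.log t)) *
      (Real.exp (largeParam α β C₂ t ρ * (1 / β + 1 / p)) * √((β + p) / (1 + p)))⁻¹ := by
  have hsq : (√((β + p) / (1 + p)))⁻¹ = √((α - 1)/((α - β) * β)) := by
    rw [← Real.sqrt_inv, inv_div, hp]
    congr 1
    field_simp
    ring
  have hphi : 1 / β + 1 / p = (α - β) / β := by
    rw [hp]; field_simp; ring
  have e1 : C₂ ^ (α/(α - β)) * (α - β) * (α - 1) ^ (-((α - 1)/(α - β))) *
              β ^ (β/(α - β)) * ρ ^ (α/(α - β)) * t ^ (-(β/(α - β))) =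
      largeParam α β C₂ t ρ * ((α - β) / β) := by
    have h2 : largeParam α β C₂ t ρ * ((α - β) / β) =
        (α - β) * Real.exp (Real.log (largeParam α β C₂ t ρ) - Real.log β) := by
      rw [Real.exp_sub, Real.exp_log hβ, Real.exp_log (largeParam_pos α β C₂ t ρ)]
      field_simp
    rw [h2]
    simp only [Real.rpow_def_of_pos hC₂, Real.rpow_def_of_pos hα1, Real.rpow_def_of_pos hβ,
      Real.rpow_def_of_pos hρ, Real.rpow_def_of_pos ht]
    rw [mul_comm _ (α - β), mul_assoc (α - β), mul_assoc (α - β), mul_assoc (α - β),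
      mul_assoc (α - β), ← Real.exp_add, ← Real.exp_add, ← Real.exp_add, ← Real.exp_add]
    congr 2
    unfold largeParam
    rw [Real.log_exp]
    field_simp
    ring
  have e2 : C₂ ^ (-(d * (1 - β)/(α - β))) *
            (α - 1) ^ (d * (α - 1) * (1 - β)/(α * (α - β))) *
            β ^ (d * (α - 1) * β/(α * (α - β))) *
          ρ ^ (-(d * (1 - β)/(α - β))) * t ^ (-(d * (α - 1) * β/(α * (α - β)))) =
      Real.exp (β * d / α * (Real.log (scaleLen α β C₂ t ρ) - Real.log t)) := by
    rw [Real.rpow_def_of_pos hC₂, Real.rpow_def_of_pos hα1, Real.rpow_def_of_pos hβ,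
      Real.rpow_def_of_pos hρ, Real.rpow_def_of_pos ht,
      ← Real.exp_add, ← Real.exp_add, ← Real.exp_add, ← Real.exp_add]
    congr 1
    unfold scaleLen largeParam
    rw [Real.log_exp, Real.log_exp]
    field_simp
    ring
  rw [mul_inv, hsq, hphi, ← Real.exp_neg, ← e1, ← e2]
  ring

theorem stmt_4
    (β : ℝ) (hβ0 : 0 < β) (hβ1 : β < 1)
    (μ : Measure ℝ) (hprob : IsProbabilityMeasure μ)
    (hsupp : μ (Set.Iic 0) = 0)
    (hlap : ∀ r : ℝ, 0 < r →
      ∫ s in Set.Ioi (0:ℝ), Real.exp (-(r * s)) ∂μ = Real.exp (-(r ^ β)))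
    {M : Type*} [MetricSpace M]
    (d α C₁ C₂ : ℝ) (hd : 0 < d) (hα : 2 ≤ α) (hC₁ : 0 < C₁) (hC₂ : 0 < C₂)
    (pSinv : ℝ → M → M → ℝ)
    (hpSinv : ∀ t : ℝ, 0 < t → ∀ x y : M,
      pSinv t x y = ∫ s in Set.Ioi (0:ℝ),
        C₁ * (t ^ β * s ^ (-β)) ^ (-(d/α)) *
          Real.exp (-((C₂ * dist x y * (t ^ β * s ^ (-β)) ^ (-(1/α))) ^ (α/(α-1)))) ∂μ) :
    ∀ ε : ℝ, 0 < ε → ∃ δ : ℝ, 0 < δ ∧ ∀ t : ℝ, 0 < t → ∀ x y : M, x ≠ y →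
      dist x y ^ (-(α/β)) * t ≤ δ →
      |pSinv t x y /
        ((C₁ * C₂ ^ (-(d * (1 - β)/(α - β))) * Real.sqrt ((α - 1)/((α - β) * β)) *
            (α - 1) ^ (d * (α - 1) * (1 - β)/(α * (α - β))) *
            β ^ (d * (α - 1) * β/(α * (α - β)))) *
          dist x y ^ (-(d * (1 - β)/(α - β))) * t ^ (-(d * (α - 1) * β/(α * (α - β)))) *
          Real.exp (-((C₂ ^ (α/(α - β)) * (α - β) * (α - 1) ^ (-((α - 1)/(α - β))) *
              β ^ (β/(α - β))) *
            dist x y ^ (α/(α - β)) * t ^ (-(β/(α - β)))))) - 1| ≤ ε := by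
  intro ε hε
  have hα1 : 0 < α - 1 := by linarith
  have hα0 : 0 < α := by linarith
  have hαβ : 0 < α - β := by linarith
  have hαβ₁ : 0 < α - 1 - β := by linarith
  have ha : 0 < β * d / α := by positivity
  have hb : 0 < β / (α - 1) := by positivity
  have hb1 : β / (α - 1) < 1 := by rw [div_lt_one hα1]; linarith
  obtain ⟨p, hp⟩ : ∃ p, p = β / (α - 1 - β) := ⟨_, rfl⟩
  have hpb : p * (1 - β / (α - 1)) = β / (α - 1) := by
    rw [hp]; field_simp
  obtain ⟨N₀, hN₀, hmain⟩ := stable_laplace ha hb hb1 hβ0 hpb hε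
  -- The value of `ρ ^ (-α / β) * t` at which the large parameter equals `N₀`.
  refine ⟨Real.exp ((α * Real.log β - (α - 1) * Real.log (α - 1) + α * Real.log C₂ -
    (α - β) * Real.log N₀) / β), Real.exp_pos _, ?_⟩
  intro t ht x y hxy hδ
  rw [hpSinv t ht x y]
  have hρ : 0 < dist x y := dist_pos.2 hxy
  generalize dist x y = ρ at hδ hρ ⊢
  have hn : N₀ ≤ largeParam α β C₂ t ρ := by
    rw [← Real.log_le_iff_le_exp (by positivity), Real.log_mul (by positivity) ht.ne',
      Real.log_rpow hρ, le_div_iff₀ hβ0] at hδ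
    unfold largeParam
    rw [← Real.log_le_iff_le_exp hN₀, le_div_iff₀ hαβ]
    have : (-(α / β) * Real.log ρ + Real.log t) * β = β * Real.log t - α * Real.log ρ := by
      field_simp; ring
    linarith
  have hL : 0 < scaleLen α β C₂ t ρ := Real.exp_pos _
  have hn0 : 0 < largeParam α β C₂ t ρ := Real.exp_pos _
  rw [asymptotic_eq hβ0 hα1 hα0 hαβ hC₂ ht hρ hαβ₁ hp,
    setIntegral_congr_fun measurableSet_Ioi fun s hs =>
      scaled_kernel_eq (d := d) (C₁ := C₁) hβ0 hα1 hα0 hαβ hC₂ ht hρ hs,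
    integral_const_mul]
  have hmap : ∀ f : ℝ → ℝ, Measurable f →
      ∫ y in Ioi (0:ℝ), f y ∂(μ.map (· / scaleLen α β C₂ t ρ)) =
        ∫ s in Ioi (0:ℝ), f (s / scaleLen α β C₂ t ρ) ∂μ := by
    intro f hf
    rw [setIntegral_map measurableSet_Ioi hf.aestronglyMeasurable (by fun_prop)]
    congr 2
    ext s
    simp [hL, div_pos_iff_of_pos_right]
  have hfin := hmain _ hn (μ.map (· / scaleLen α β C₂ t ρ))
    (Measure.isProbabilityMeasure_map (by fun_prop)) (by
      intro v hv
      rw [hmap _ (by fun_prop)]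
      have h1 := hlap (largeParam α β C₂ t ρ * v / scaleLen α β C₂ t ρ) (by positivity)
      have h2 : (largeParam α β C₂ t ρ * v / scaleLen α β C₂ t ρ) ^ β =
          largeParam α β C₂ t ρ / β * v ^ β := by
        have h3 : largeParam α β C₂ t ρ / β =
            Real.exp (Real.log (largeParam α β C₂ t ρ) - Real.log β) := by
          rw [Real.exp_sub, Real.exp_log hβ0, Real.exp_log hn0]
        rw [h3, Real.rpow_def_of_pos hv, Real.rpow_def_of_pos (by positivity),
          Real.log_div (by positivity) hL.ne', Real.log_mul hn0.ne' hv.ne', ← Real.exp_add]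
        congr 1
        unfold scaleLen
        rw [Real.log_exp]
        field_simp
        ring
      rw [h2] at h1
      rw [← h1]
      congr 1
      funext s
      congr 1
      ring)
  rw [hmap _ (by fun_prop)] at hfin
  refine le_of_eq_of_le ?_ hfin
  congr 2
  have h4 : 0 < Real.exp (β * d / α * (Real.log (scaleLen α β C₂ t ρ) - Real.log t)) :=
    Real.exp_pos _
  rw [mul_div_mul_left _ _ (by positivity), div_inv_eq_mul, mul_assoc]
end

section
/- Let p^S(t,x,y) = ∫_{(0,∞)} (4π t^{1/β} s)^{-d/2} exp(-|x-y|²/(4 t^{1/β} s)) μ_β(ds) be the β-stable subordinate Gaussian kernel on ℝ^d. Then, as |x-y| t^{-1/(2β)} → ∞, p^S(t,x,y) ∼ (β 4^β Γ(d/2 + β) / (π^{d/2} Γ(1-β))) |x-y|^{-d-2β} t; that is, for every ε > 0 there exists R > 0 such that whenever t > 0, x, y ∈ ℝ^d and |x-y| t^{-1/(2β)} ≥ R, the ratio of the two sides lies within ε of 1. -/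
/-!
The kernel depends on `(t, x, y)` only through `T = t ^ (1 / β)` and `l = |x - y|² / (4 T)`:
with `a = d / 2` it equals `(π |x - y|²) ^ (-a) * ∫ f (s / l) dμ(s)`, where
`f s = s ^ (-a) * exp (-1 / s)`. The hypothesis `|x - y| t ^ (-1 / (2 β)) → ∞` says `l → ∞`, so
everything reduces to `tendsto_stable_integral`:
`l ^ β * ∫ f (s / l) dμ(s) → β / Γ(1 - β) * Γ(a + β) = ∫ f dν`, where
`ν(ds) = β / Γ(1 - β) * s ^ (-1 - β) ds` is the Lévy measure of the stable subordinator.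

This is vague convergence of the rescaled laws to `ν`. No Tauberian theorem is needed, because `f` is
flat at `0` and vanishes at infinity: `f s = q (exp (-s)) * (1 - exp (-s))` with `q` continuous on
`[0, 1]` (`exists_continuous_profile`). After weighting by `1 - exp (-s)` all measures are finite,
and in the variable `u = exp (-s) ∈ [0, 1]` their `n`-th moments are differences of Laplace exponents,
converging to `(n + 1) ^ β - n ^ β`, which is the `n`-th moment of the weighted `ν`
(`integral_levy_moment`). By the Weierstrass approximation theorem, convergence of moments implies
convergence of the integrals of every continuous `q` (`tendsto_weighted`).
-/

open MeasureTheory Set Filter Topology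

/-! ### The method of moments for weighted measures -/

/-- The method of moments on `[0, 1]`, for the push-forwards under `v i` of the finite measures with
density `w i` with respect to `κ`: convergence of all moments gives weak convergence. -/
theorem tendsto_weighted {ι : Type*} {l : Filter ι} (κ κ₀ : Measure ℝ)
    (v w : ι → ℝ → ℝ) (v₀ w₀ : ℝ → ℝ)
    (hv : ∀ᶠ i in l, ∀ᵐ s ∂κ, v i s ∈ Icc (0:ℝ) 1)
    (hvm : ∀ᶠ i in l, AEStronglyMeasurable (v i) κ)
    (hw : ∀ᶠ i in l, ∀ᵐ s ∂κ, 0 ≤ w i s)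
    (hwi : ∀ᶠ i in l, Integrable (w i) κ)
    (hv₀ : ∀ᵐ s ∂κ₀, v₀ s ∈ Icc (0:ℝ) 1) (hvm₀ : AEStronglyMeasurable v₀ κ₀)
    (hw₀ : ∀ᵐ s ∂κ₀, 0 ≤ w₀ s) (hwi₀ : Integrable w₀ κ₀)
    (hmom : ∀ n : ℕ, Tendsto (fun i => ∫ s, v i s ^ n * w i s ∂κ) l
      (𝓝 (∫ s, v₀ s ^ n * w₀ s ∂κ₀)))
    (q : ℝ → ℝ) (hq : Continuous q) :
    Tendsto (fun i => ∫ s, q (v i s) * w i s ∂κ) l (𝓝 (∫ s, q (v₀ s) * w₀ s ∂κ₀)) := by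
  have hint : ∀ (κ : Measure ℝ) (v w : ℝ → ℝ), (∀ᵐ s ∂κ, v s ∈ Icc (0:ℝ) 1) →
      AEStronglyMeasurable v κ → Integrable w κ → ∀ r : ℝ → ℝ, Continuous r →
      Integrable (fun s => r (v s) * w s) κ := by
    intro κ v w hv hvm hwi r hr
    obtain ⟨C, hC⟩ := isCompact_Icc.exists_bound_of_continuousOn (s := Icc (0:ℝ) 1) hr.continuousOn
    refine hwi.bdd_mul (c := C) (hr.comp_aestronglyMeasurable hvm) ?_
    filter_upwards [hv] with s hs using hC _ hs
  have hclose : ∀ (κ : Measure ℝ) (v w : ℝ → ℝ), (∀ᵐ s ∂κ, v s ∈ Icc (0:ℝ) 1) →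
      AEStronglyMeasurable v κ → (∀ᵐ s ∂κ, 0 ≤ w s) → Integrable w κ →
      ∀ (r : ℝ → ℝ) (δ : ℝ), Continuous r → (∀ u ∈ Icc (0:ℝ) 1, |r u - q u| < δ) →
      |(∫ s, r (v s) * w s ∂κ) - ∫ s, q (v s) * w s ∂κ| ≤ δ * ∫ s, w s ∂κ := by
    intro κ v w hv hvm hw hwi r δ hr hδ
    rw [← integral_sub (hint κ v w hv hvm hwi r hr) (hint κ v w hv hvm hwi q hq),
      ← integral_const_mul, ← Real.norm_eq_abs]
    refine norm_integral_le_of_norm_le (hwi.const_mul δ) ?_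
    filter_upwards [hv, hw] with s hs hs'
    rw [← sub_mul, norm_mul, Real.norm_eq_abs, Real.norm_of_nonneg hs']
    exact mul_le_mul_of_nonneg_right (hδ _ hs).le hs'
  have hpoly : ∀ P : Polynomial ℝ, Tendsto (fun i => ∫ s, P.eval (v i s) * w i s ∂κ) l
      (𝓝 (∫ s, P.eval (v₀ s) * w₀ s ∂κ₀)) := by
    intro P
    have key : ∀ (κ : Measure ℝ) (v w : ℝ → ℝ), (∀ᵐ s ∂κ, v s ∈ Icc (0:ℝ) 1) →
      AEStronglyMeasurable v κ → Integrable w κ →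
      ∫ s, P.eval (v s) * w s ∂κ =
        ∑ n ∈ Finset.range (P.natDegree + 1), P.coeff n * ∫ s, v s ^ n * w s ∂κ := by
      intro κ v w hv hvm hwi
      simp_rw [Polynomial.eval_eq_sum_range, Finset.sum_mul, mul_assoc]
      rw [integral_finsetSum]
      · simp_rw [integral_const_mul]
      · intro n _
        exact (hint κ v w hv hvm hwi (fun u => u ^ n) (by fun_prop)).const_mul _
    rw [key κ₀ v₀ w₀ hv₀ hvm₀ hwi₀]
    refine (tendsto_finsetSum _ fun n _ => (hmom n).const_mul (P.coeff n)).congr' ?_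
    filter_upwards [hv, hvm, hwi] with i h1 h2 h3
    exact (key κ _ _ h1 h2 h3).symm
  set B := ∫ s, w₀ s ∂κ₀ with hB
  have hB0 : 0 ≤ B := integral_nonneg_of_ae hw₀
  have hmass : ∀ᶠ i in l, ∫ s, w i s ∂κ < B + 1 := by
    have := hmom 0
    simp only [pow_zero, one_mul] at this
    exact this.eventually_lt_const (by linarith)
  rw [Metric.tendsto_nhds]
  intro ε hε
  -- the total error is at most `δ (B + 1) + ε / 3 + δ B`
  obtain ⟨P, hP⟩ := exists_polynomial_near_of_continuousOn 0 1 q hq.continuousOn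
    (ε / (3 * (B + 1))) (by positivity)
  filter_upwards [hv, hvm, hw, hwi, hmass,
    Metric.tendsto_nhds.1 (hpoly P) (ε / 3) (by positivity)] with i h1 h2 h3 h4 h5 h6
  have e1 := hclose κ _ _ h1 h2 h3 h4 (fun u => P.eval u) _ P.continuous hP
  have e2 := hclose κ₀ _ _ hv₀ hvm₀ hw₀ hwi₀ (fun u => P.eval u) _ P.continuous hP
  have hδ : 0 < ε / (3 * (B + 1)) := by positivity
  have hδB : ε / (3 * (B + 1)) * (B + 1) = ε / 3 := by field_simp
  have e3 : ε / (3 * (B + 1)) * ∫ s, w i s ∂κ < ε / 3 := by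
    rw [← hδB]; exact mul_lt_mul_of_pos_left h5 hδ
  have e4 : ε / (3 * (B + 1)) * B ≤ ε / 3 := by
    rw [← hδB]; exact mul_le_mul_of_nonneg_left (by linarith) hδ.le
  rw [Real.dist_eq] at h6 ⊢
  rw [abs_lt] at h6 ⊢
  rw [abs_le] at e1 e2
  constructor <;> linarith [e1.1, e1.2, e2.1, e2.2, h6.1, h6.2]

/-! ### The stable Lévy measure and its moments -/

theorem one_sub_exp_bounds {r s : ℝ} (hr : 0 ≤ r) (hs : 0 < s) :
    0 ≤ 1 - Real.exp (-(r * s)) ∧ 1 - Real.exp (-(r * s)) ≤ 1 ∧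
      1 - Real.exp (-(r * s)) ≤ r * s := by
  have h1 : Real.exp (-(r * s)) ≤ 1 := Real.exp_le_one_iff.2 (by nlinarith)
  have h2 := Real.exp_pos (-(r * s))
  have h3 := Real.add_one_le_exp (-(r * s))
  exact ⟨by linarith, by linarith, by linarith⟩

theorem integrableOn_levy {β : ℝ} (hβ0 : 0 < β) (hβ1 : β < 1) {r : ℝ} (hr : 0 ≤ r) :
    IntegrableOn (fun s : ℝ => (1 - Real.exp (-(r * s))) * s ^ (-1 - β)) (Ioi 0) := by
  have hm : Measurable (fun s : ℝ => (1 - Real.exp (-(r * s))) * s ^ (-1 - β)) := by fun_prop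
  rw [← Ioc_union_Ioi_eq_Ioi zero_le_one]
  refine IntegrableOn.union ?_ ?_
  · have h : IntegrableOn (fun s : ℝ => r * s ^ (-β)) (Ioc 0 1) := by
      rw [integrableOn_Ioc_iff_integrableOn_Ioo]
      exact ((intervalIntegral.integrableOn_Ioo_rpow_iff zero_lt_one).2 (by linarith)).const_mul r
    refine Integrable.mono' h hm.aestronglyMeasurable ?_
    filter_upwards [ae_restrict_mem measurableSet_Ioc] with s hs
    obtain ⟨h1, -, h3⟩ := one_sub_exp_bounds hr hs.1
    have h4 := Real.rpow_nonneg hs.1.le (-1 - β)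
    rw [Real.norm_of_nonneg (mul_nonneg h1 h4)]
    calc _ ≤ r * s * s ^ (-1 - β) := mul_le_mul_of_nonneg_right h3 h4
      _ = r * s ^ (-β) := by
        rw [mul_assoc, ← Real.rpow_one_add' hs.1.le (by linarith)]; congr 2; ring
  · refine Integrable.mono' (integrableOn_Ioi_rpow_of_lt (a := -1 - β) (by linarith) zero_lt_one)
      hm.aestronglyMeasurable ?_
    filter_upwards [ae_restrict_mem measurableSet_Ioi] with s hs
    have hs0 : 0 < s := zero_lt_one.trans hs
    obtain ⟨h1, h2, -⟩ := one_sub_exp_bounds hr hs0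
    have h4 := Real.rpow_nonneg hs0.le (-1 - β)
    rw [Real.norm_of_nonneg (mul_nonneg h1 h4)]
    exact mul_le_of_le_one_left h4 h2

/-- The Lévy–Khintchine formula for `r ^ β`, by integrating `s ^ (-1 - β)` by parts. -/
theorem integral_levy {β : ℝ} (hβ0 : 0 < β) (hβ1 : β < 1) {r : ℝ} (hr : 0 ≤ r) :
    ∫ s in Ioi (0:ℝ), (1 - Real.exp (-(r * s))) * s ^ (-1 - β) =
      Real.Gamma (1 - β) / β * r ^ β := by
  rcases hr.eq_or_lt with rfl | hr0
  · simp [Real.zero_rpow hβ0.ne']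
  have hG := Real.integral_rpow_mul_exp_neg_mul_Ioi (a := 1 - β) (by linarith) hr0
  have hGpos : 0 < (1 / r) ^ (1 - β) * Real.Gamma (1 - β) :=
    mul_pos (by positivity) (Real.Gamma_pos_of_pos (by linarith))
  -- an integral with a nonzero value cannot be the junk value of a non-integrable function
  have hGi : IntegrableOn (fun s : ℝ => s ^ (1 - β - 1) * Real.exp (-(r * s))) (Ioi 0) := by
    by_contra hcon
    rw [integral_undef hcon] at hG
    exact hGpos.ne hG
  have huv' : ∀ s : ℝ, r * Real.exp (-(r * s)) * (-(s ^ (-β)) / β) =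
      -(r / β) * (s ^ (1 - β - 1) * Real.exp (-(r * s))) := by
    intro s
    rw [show 1 - β - 1 = -β by ring]; ring
  have hparts := integral_Ioi_mul_deriv_eq_deriv_mul (a := (0:ℝ)) (a' := (0:ℝ)) (b' := (0:ℝ))
    (u := fun s : ℝ => 1 - Real.exp (-(r * s))) (v := fun s : ℝ => -(s ^ (-β)) / β)
    (u' := fun s => r * Real.exp (-(r * s))) (v' := fun s => s ^ (-1 - β))
    (fun s _ => by
      have := (((hasDerivAt_id s).const_mul r).neg.exp).const_sub 1
      refine this.congr_deriv ?_
      simp; ring)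
    (fun s hs => by
      have := ((Real.hasDerivAt_rpow_const (p := -β) (Or.inl (ne_of_gt hs))).neg.div_const β)
      refine this.congr_deriv ?_
      rw [show -β - 1 = -1 - β by ring]; field_simp)
    (integrableOn_levy hβ0 hβ1 hr)
    (by
      refine (hGi.const_mul (-(r / β))).congr (Eventually.of_forall fun s => ?_)
      exact (huv' s).symm)
    (by
      have h0 : Tendsto (fun s : ℝ => -(r / β * s ^ (1 - β))) (𝓝[>] 0) (𝓝 0) := by
        have : ContinuousAt (fun s : ℝ => -(r / β * s ^ (1 - β))) 0 :=
          ((Real.continuousAt_rpow_const 0 (1 - β) (Or.inr (by linarith))).const_mul _).neg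
        have h := this.tendsto.mono_left (nhdsWithin_le_nhds (s := Ioi 0))
        simpa [Real.zero_rpow (show 1 - β ≠ 0 by linarith)] using h
      refine tendsto_of_tendsto_of_tendsto_of_le_of_le' h0 tendsto_const_nhds ?_ ?_
      · filter_upwards [self_mem_nhdsWithin] with s (hs : 0 < s)
        obtain ⟨h1, h2, h3⟩ := one_sub_exp_bounds hr hs
        have h4 := Real.rpow_pos_of_pos hs (-β)
        have h5 : s ^ (1 - β) = s * s ^ (-β) := by
          rw [← Real.rpow_one_add' hs.le (by linarith)]; congr 1
        simp only [Pi.mul_apply]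
        rw [h5, neg_div, mul_neg, neg_le_neg_iff]
        calc _ ≤ r * s * (s ^ (-β) / β) := mul_le_mul_of_nonneg_right h3 (by positivity)
          _ = _ := by ring
      · filter_upwards [self_mem_nhdsWithin] with s (hs : 0 < s)
        obtain ⟨h1, h2, h3⟩ := one_sub_exp_bounds hr hs
        have h4 := Real.rpow_pos_of_pos hs (-β)
        simp only [Pi.mul_apply]
        rw [neg_div, mul_neg, neg_nonpos]
        positivity)
    (by
      have h0 : Tendsto (fun s : ℝ => -(s ^ (-β)) / β) atTop (𝓝 0) := by
        simpa using (tendsto_rpow_neg_atTop hβ0).neg.div_const β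
      refine tendsto_of_tendsto_of_tendsto_of_le_of_le' h0 tendsto_const_nhds ?_ ?_
      · filter_upwards [eventually_gt_atTop 0] with s hs
        obtain ⟨h1, h2, h3⟩ := one_sub_exp_bounds hr hs
        have h4 := Real.rpow_pos_of_pos hs (-β)
        simp only [Pi.mul_apply]
        rw [neg_div, mul_neg, neg_le_neg_iff]
        exact mul_le_of_le_one_left (by positivity) h2
      · filter_upwards [eventually_gt_atTop 0] with s hs
        obtain ⟨h1, h2, h3⟩ := one_sub_exp_bounds hr hs
        have h4 := Real.rpow_pos_of_pos hs (-β)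
        simp only [Pi.mul_apply]
        rw [neg_div, mul_neg, neg_nonpos]
        positivity)
  rw [hparts]
  simp_rw [huv']
  rw [integral_const_mul, hG, one_div, Real.inv_rpow hr, ← Real.rpow_neg hr,
    show r ^ β = r * r ^ (-(1 - β)) by rw [← Real.rpow_one_add' hr (by linarith)]; congr 1; ring]
  ring

/-- The moments, in the variable `exp (-s)`, of the Lévy measure weighted by `1 - exp (-s)`. -/
theorem integral_levy_moment {β : ℝ} (hβ0 : 0 < β) (hβ1 : β < 1) (n : ℕ) :
    ∫ s in Ioi (0:ℝ), Real.exp (-s) ^ n *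
        (β / Real.Gamma (1 - β) * ((1 - Real.exp (-s)) * s ^ (-1 - β))) =
      ((n:ℝ) + 1) ^ β - (n:ℝ) ^ β := by
  have hΓ : 0 < Real.Gamma (1 - β) := Real.Gamma_pos_of_pos (by linarith)
  have h : ∀ s : ℝ, Real.exp (-s) ^ n *
        (β / Real.Gamma (1 - β) * ((1 - Real.exp (-s)) * s ^ (-1 - β))) =
      β / Real.Gamma (1 - β) * ((1 - Real.exp (-(((n:ℝ) + 1) * s))) * s ^ (-1 - β) -
        (1 - Real.exp (-((n:ℝ) * s))) * s ^ (-1 - β)) := by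
    intro s
    rw [show -(((n:ℝ) + 1) * s) = n * (-s) + -s by ring, Real.exp_add, Real.exp_nat_mul,
      show -((n:ℝ) * s) = n * (-s) by ring, Real.exp_nat_mul]
    ring
  simp_rw [h]
  rw [integral_const_mul, integral_sub (integrableOn_levy hβ0 hβ1 (by positivity))
    (integrableOn_levy hβ0 hβ1 (by positivity)), integral_levy hβ0 hβ1 (by positivity),
    integral_levy hβ0 hβ1 (by positivity)]
  field_simp

theorem integral_inv_gamma {p : ℝ} (hp : 0 < p) :
    ∫ s in Ioi (0:ℝ), s ^ (-p - 1) * Real.exp (-s⁻¹) = Real.Gamma p := by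
  rw [Real.Gamma_eq_integral hp, 
    ← integral_comp_rpow_Ioi (fun y : ℝ => Real.exp (-y) * y ^ (p - 1)) (p := -1) (by norm_num)]
  refine setIntegral_congr_fun measurableSet_Ioi fun s (hs : 0 < s) => ?_
  simp only [smul_eq_mul, abs_neg, abs_one, one_mul]
  rw [Real.rpow_neg_one, Real.inv_rpow hs.le, ← Real.rpow_neg hs.le, mul_left_comm,
    ← Real.rpow_add hs, mul_comm]
  congr 2; ring

/-- The rescaled Laplace transforms converge to the Laplace exponent `r ^ β`. -/
theorem tendsto_one_sub_exp {β : ℝ} (hβ0 : 0 < β) {r : ℝ} (hr : 0 ≤ r) :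
    Tendsto (fun l : ℝ => l ^ β * (1 - Real.exp (-((r / l) ^ β)))) atTop (𝓝 (r ^ β)) := by
  have hd : HasDerivAt (fun z : ℝ => -Real.exp (-(r ^ β * z))) (r ^ β) 0 := by
    refine (((hasDerivAt_id (0:ℝ)).const_mul (r ^ β)).neg.exp).neg.congr_deriv ?_
    simp
  -- difference quotients of `-exp (-(r ^ β * z))` at `0`, along `z = l ^ (-β)`
  have h1 := hasDerivAt_iff_tendsto_slope.1 hd
  have h2 : Tendsto (fun l : ℝ => l ^ (-β)) atTop (𝓝[≠] 0) := by
    refine tendsto_nhdsWithin_iff.2 ⟨tendsto_rpow_neg_atTop hβ0, ?_⟩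
    filter_upwards [eventually_gt_atTop 0] with l hl
    exact (Real.rpow_pos_of_pos hl _).ne'
  refine (h1.comp h2).congr' ?_
  filter_upwards [eventually_gt_atTop 0] with l hl
  simp only [Function.comp, slope_def_field]
  rw [Real.div_rpow hr hl.le, Real.rpow_neg hl.le, div_eq_mul_inv (r ^ β)]
  simp
  ring


/-! ### The test function -/

/-- The function `f s / (1 - exp (-s))`, with `f s = s ^ (-a) * exp (-1 / s)`, vanishes at infinity.
The behaviour at `0` is `tendsto_profile_zero`. -/
theorem tendsto_profile_atTop {a : ℝ} (ha : 0 < a) :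
    Tendsto (fun s : ℝ => s ^ (-a) * Real.exp (-s⁻¹) / (1 - Real.exp (-s))) atTop (𝓝 0) := by
  have h1 := tendsto_rpow_neg_atTop ha
  have h2 : Tendsto (fun s : ℝ => Real.exp (-s⁻¹)) atTop (𝓝 1) := by
    have h := (Real.continuous_exp.tendsto _).comp (tendsto_inv_atTop_zero (𝕜 := ℝ)).neg
    rwa [neg_zero, Real.exp_zero] at h
  have h3 : Tendsto (fun s : ℝ => 1 - Real.exp (-s)) atTop (𝓝 1) := by
    simpa using Real.tendsto_exp_neg_atTop_nhds_zero.const_sub 1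
  have h := (h1.mul h2).div h3 one_ne_zero
  rwa [zero_mul, zero_div] at h

theorem tendsto_profile_zero (a : ℝ) :
    Tendsto (fun s : ℝ => s ^ (-a) * Real.exp (-s⁻¹) / (1 - Real.exp (-s))) (𝓝[>] 0) (𝓝 0) := by
  have h1 : Tendsto (fun s : ℝ => (s⁻¹) ^ (a + 1) * Real.exp (-1 * s⁻¹)) (𝓝[>] 0) (𝓝 0) :=
    (tendsto_rpow_mul_exp_neg_mul_atTop_nhds_zero (a + 1) 1 one_pos).comp tendsto_inv_nhdsGT_zero
  have hd : HasDerivAt (fun s : ℝ => -Real.exp (-s)) 1 0 := by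
    refine ((hasDerivAt_id (0:ℝ)).neg.exp).neg.congr_deriv ?_
    simp
  have h2 := (hasDerivAt_iff_tendsto_slope.1 hd).mono_left
    (nhdsWithin_mono (0:ℝ) (fun s (hs : 0 < s) => hs.ne'))
  have h3 := h1.div h2 one_ne_zero
  rw [zero_div] at h3
  refine h3.congr' ?_
  filter_upwards [self_mem_nhdsWithin] with s (hs : 0 < s)
  have h4 : 0 < 1 - Real.exp (-s) := by
    have : Real.exp (-s) < 1 := Real.exp_lt_one_iff.2 (by linarith)
    linarith
  have h5 : s⁻¹ ^ (a + 1) = s ^ (-a) * s⁻¹ := by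
    rw [Real.inv_rpow hs.le, ← Real.rpow_neg hs.le, ← Real.rpow_neg_one s, ← Real.rpow_add hs]
    congr 1; ring
  simp only [Pi.div_apply, slope_def_field]
  rw [h5, neg_zero, Real.exp_zero, neg_one_mul, sub_zero,
    show -Real.exp (-s) - -1 = 1 - Real.exp (-s) by ring]
  field_simp

/-- The test function `s ^ (-a) * exp (-1 / s)` is `1 - exp (-s)` times a continuous function of
`exp (-s)`. -/
theorem exists_continuous_profile {a : ℝ} (ha : 0 < a) :
    ∃ q : ℝ → ℝ, Continuous q ∧ ∀ s : ℝ, 0 < s →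
      q (Real.exp (-s)) * (1 - Real.exp (-s)) = s ^ (-a) * Real.exp (-s⁻¹) := by
  set g : ℝ → ℝ := fun u => (-Real.log u) ^ (-a) * Real.exp (-(-Real.log u)⁻¹) /
    (1 - Real.exp (-(-Real.log u))) with hg
  have hlog : ∀ u ∈ Ioo (0:ℝ) 1, 0 < -Real.log u := fun u hu =>
    neg_pos.2 (Real.log_neg hu.1 hu.2)
  have hcont : ContinuousOn g (Ioo 0 1) := by
    have hl : ContinuousOn (fun u => -Real.log u) (Ioo 0 1) :=
      (Real.continuousOn_log.mono fun u hu => hu.1.ne').neg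
    refine ContinuousOn.div ?_ ?_ ?_
    · refine (hl.rpow_const fun u hu => Or.inl (hlog u hu).ne').mul ?_
      exact (hl.inv₀ fun u hu => (hlog u hu).ne').neg.rexp
    · exact continuousOn_const.sub hl.neg.rexp
    · intro u hu
      have : Real.exp (-(-Real.log u)) < 1 := Real.exp_lt_one_iff.2 (by linarith [hlog u hu])
      linarith
  have h0 : Tendsto g (𝓝[>] 0) (𝓝 0) :=
    (tendsto_profile_atTop ha).comp (tendsto_neg_atBot_atTop.comp Real.tendsto_log_nhdsGT_zero)
  have h1 : Tendsto g (𝓝[<] 1) (𝓝 0) := by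
    refine (tendsto_profile_zero a).comp (tendsto_nhdsWithin_iff.2 ⟨?_, ?_⟩)
    · have := (Real.continuousAt_log one_ne_zero).neg.tendsto
      rw [Pi.neg_apply, Real.log_one, neg_zero] at this
      exact this.mono_left nhdsWithin_le_nhds
    · filter_upwards [Ioo_mem_nhdsLT zero_lt_one] with u hu using hlog u hu
  have hext := continuousOn_Icc_extendFrom_Ioo hcont h0 h1
  refine ⟨IccExtend zero_le_one ((Icc 0 1).domRestrict (extendFrom (Ioo 0 1) g)),
    hext.domRestrict.Icc_extend', fun s hs => ?_⟩
  have hu : Real.exp (-s) ∈ Ioo (0:ℝ) 1 := ⟨Real.exp_pos _, Real.exp_lt_one_iff.2 (by linarith)⟩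
  rw [IccExtend_of_mem _ _ (Ioo_subset_Icc_self hu), domRestrict_apply,
    extendFrom_eq (subset_closure hu) (hcont _ hu)]
  have : 1 - Real.exp (-s) ≠ 0 := by linarith [hu.2]
  simp only [hg, Real.log_exp, neg_neg]
  field_simp
/-! ### Convergence of the rescaled laws and of the kernel -/

/-- The rescaled laws `l ^ β * μ (l ds)` converge, when tested against `s ^ (-a) * exp (-1 / s)`, to
the Lévy measure. -/
theorem tendsto_stable_integral {β : ℝ} (hβ0 : 0 < β) (hβ1 : β < 1)
    (μ : Measure ℝ) [IsProbabilityMeasure μ] (hsupp : μ (Iic 0) = 0)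
    (hlap : ∀ r : ℝ, 0 < r →
      ∫ s in Ioi (0:ℝ), Real.exp (-(r * s)) ∂μ = Real.exp (-(r ^ β)))
    {a : ℝ} (ha : 0 < a) :
    Tendsto (fun l : ℝ => l ^ β * ∫ s in Ioi (0:ℝ), (s / l) ^ (-a) * Real.exp (-(s / l)⁻¹) ∂μ)
      atTop (𝓝 (β / Real.Gamma (1 - β) * Real.Gamma (a + β))) := by
  obtain ⟨q, hq, hqe⟩ := exists_continuous_profile ha
  have hlap' : ∀ r : ℝ, 0 ≤ r →
      ∫ s in Ioi (0:ℝ), Real.exp (-(r * s)) ∂μ = Real.exp (-(r ^ β)) := by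
    intro r hr
    rcases hr.eq_or_lt with rfl | hr
    · have h : μ.real (Ioi 0) = 1 := by
        have := probReal_compl_eq_one_sub (μ := μ) (measurableSet_Iic (a := (0:ℝ)))
        rwa [compl_Iic, measureReal_def μ (Iic 0), hsupp, ENNReal.toReal_zero, sub_zero] at this
      simp [Real.zero_rpow hβ0.ne', h]
    · exact hlap r hr
  have hint : ∀ r : ℝ, 0 ≤ r → Integrable (fun s : ℝ => Real.exp (-(r * s))) (μ.restrict (Ioi 0)) := by
    intro r hr
    by_contra hcon
    have := hlap' r hr
    rw [integral_undef hcon] at this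
    exact (Real.exp_pos _).ne this
  have hpos : ∀ᵐ s ∂(μ.restrict (Ioi 0)), (0:ℝ) < s := ae_restrict_mem measurableSet_Ioi
  have hpos₀ : ∀ᵐ s ∂((volume : Measure ℝ).restrict (Ioi 0)), (0:ℝ) < s :=
    ae_restrict_mem measurableSet_Ioi
  have hΓ : 0 < Real.Gamma (1 - β) := Real.Gamma_pos_of_pos (by linarith)
  have main := tendsto_weighted (l := atTop) (μ.restrict (Ioi 0)) (volume.restrict (Ioi 0))
    (fun l s : ℝ => Real.exp (-(s / l))) (fun l s : ℝ => l ^ β * (1 - Real.exp (-(s / l))))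
    (fun s => Real.exp (-s))
    (fun s => β / Real.Gamma (1 - β) * ((1 - Real.exp (-s)) * s ^ (-1 - β)))
    (by
      filter_upwards [eventually_gt_atTop 0] with l hl
      filter_upwards [hpos] with s hs
      exact ⟨(Real.exp_pos _).le, Real.exp_le_one_iff.2 (neg_nonpos.2 (by positivity))⟩)
    (Eventually.of_forall fun l => by fun_prop)
    (by
      filter_upwards [eventually_gt_atTop 0] with l hl
      filter_upwards [hpos] with s hs
      have := Real.exp_le_one_iff.2 (neg_nonpos.2 (show 0 ≤ s / l by positivity))
      exact mul_nonneg (by positivity) (by linarith))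
    (by
      filter_upwards [eventually_gt_atTop 0] with l hl
      have := hint l⁻¹ (by positivity)
      refine ((integrable_const 1).sub (this.congr (Eventually.of_forall fun s => ?_))).const_mul _
      simp only
      rw [div_eq_inv_mul])
    (by
      filter_upwards [hpos₀] with s hs
      exact ⟨(Real.exp_pos _).le, Real.exp_le_one_iff.2 (by linarith)⟩)
    (by fun_prop)
    (by
      filter_upwards [hpos₀] with s hs
      have := Real.exp_le_one_iff.2 (show -s ≤ 0 by linarith)
      exact mul_nonneg (by positivity) (mul_nonneg (by linarith) (by positivity)))
    (by simpa using (integrableOn_levy hβ0 hβ1 zero_le_one).const_mul (β / Real.Gamma (1 - β)))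
    (by
      intro n
      rw [integral_levy_moment hβ0 hβ1]
      refine ((tendsto_one_sub_exp hβ0 (r := (n:ℝ) + 1) (by positivity)).sub
        (tendsto_one_sub_exp hβ0 (r := (n:ℝ)) (by positivity))).congr' ?_
      filter_upwards [eventually_gt_atTop 0] with l hl
      have h : ∀ s : ℝ, Real.exp (-(s / l)) ^ n * (l ^ β * (1 - Real.exp (-(s / l)))) =
          l ^ β * (Real.exp (-(n / l * s)) - Real.exp (-((n + 1) / l * s))) := by
        intro s
        rw [show -(((n:ℝ) + 1) / l * s) = n * (-(s / l)) + -(s / l) by ring, Real.exp_add,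
          show -((n:ℝ) / l * s) = n * (-(s / l)) by ring, Real.exp_nat_mul]
        ring
      simp_rw [h]
      rw [integral_const_mul, integral_sub (hint _ (by positivity)) (hint _ (by positivity)),
        hlap' _ (by positivity), hlap' _ (by positivity)]
      ring)
    q hq
  have hlim : ∫ s in Ioi (0:ℝ), q (Real.exp (-s)) *
      (β / Real.Gamma (1 - β) * ((1 - Real.exp (-s)) * s ^ (-1 - β))) =
      β / Real.Gamma (1 - β) * Real.Gamma (a + β) := by
    rw [← integral_inv_gamma (show 0 < a + β by positivity), ← integral_const_mul]
    refine setIntegral_congr_fun measurableSet_Ioi fun s (hs : 0 < s) => ?_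
    rw [show -(a + β) - 1 = -a + (-1 - β) by ring, Real.rpow_add hs]
    linear_combination (β / Real.Gamma (1 - β) * s ^ (-1 - β)) * hqe s hs
  rw [hlim] at main
  refine main.congr' ?_
  filter_upwards [eventually_gt_atTop 0] with l hl
  rw [← integral_const_mul]
  refine setIntegral_congr_fun measurableSet_Ioi fun s (hs : 0 < s) => ?_
  rw [← hqe (s / l) (by positivity)]
  ring

theorem stmt_5
    (β : ℝ) (hβ0 : 0 < β) (hβ1 : β < 1)
    (μ : Measure ℝ) (hprob : IsProbabilityMeasure μ)
    (hsupp : μ (Set.Iic 0) = 0)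
    (hlap : ∀ r : ℝ, 0 < r →
      ∫ s in Set.Ioi (0:ℝ), Real.exp (-(r * s)) ∂μ = Real.exp (-(r ^ β)))
    (d : ℕ) (hd : 1 ≤ d)
    (pS : ℝ → EuclideanSpace ℝ (Fin d) → EuclideanSpace ℝ (Fin d) → ℝ)
    (hpS : ∀ t : ℝ, 0 < t → ∀ x y : EuclideanSpace ℝ (Fin d),
      pS t x y = ∫ s in Set.Ioi (0:ℝ),
        (4 * Real.pi * (t ^ (1/β) * s)) ^ (-((d:ℝ)/2)) *
          Real.exp (-(dist x y ^ 2 / (4 * (t ^ (1/β) * s)))) ∂μ) :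
    ∀ ε : ℝ, 0 < ε → ∃ R : ℝ, 0 < R ∧ ∀ t : ℝ, 0 < t →
      ∀ x y : EuclideanSpace ℝ (Fin d),
      R ≤ dist x y * t ^ (-(1/(2*β))) →
      |pS t x y /
        (β * 4 ^ β * Real.Gamma ((d:ℝ)/2 + β) /
            (Real.pi ^ ((d:ℝ)/2) * Real.Gamma (1 - β)) *
          (dist x y ^ (-((d:ℝ) + 2*β)) * t)) - 1| ≤ ε := by
  intro ε hε
  have ha : 0 < (d:ℝ) / 2 := by
    have : (1:ℝ) ≤ d := by exact_mod_cast hd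
    linarith
  set a : ℝ := (d:ℝ) / 2 with had
  have hΓ1 : 0 < Real.Gamma (1 - β) := Real.Gamma_pos_of_pos (by linarith)
  have hΓ2 : 0 < Real.Gamma (a + β) := Real.Gamma_pos_of_pos (by linarith)
  have hC : 0 < β / Real.Gamma (1 - β) * Real.Gamma (a + β) := by positivity
  have hT := (tendsto_stable_integral hβ0 hβ1 μ hsupp hlap ha).div_const
    (β / Real.Gamma (1 - β) * Real.Gamma (a + β))
  rw [div_self hC.ne'] at hT
  obtain ⟨L, hL⟩ := eventually_atTop.1 (Metric.tendsto_nhds.1 hT ε hε)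
  -- `R ≤ |x - y| t ^ (-1 / (2 β))` gives `4 l ≥ R ^ 2 = 4 (max L 1) ^ 2`, hence `l ≥ L`
  refine ⟨2 * (max L 1), by positivity, fun t ht x y hR => ?_⟩
  set ρ := dist x y with hρ
  set T := t ^ (1 / β) with hTdef
  have hT0 : 0 < T := Real.rpow_pos_of_pos ht _
  have hM : 1 ≤ max L 1 := le_max_right _ _
  have htq : 0 < t ^ (-(1 / (2 * β))) := Real.rpow_pos_of_pos ht _
  have hρ0 : 0 < ρ := by
    by_contra hcon
    nlinarith [mul_nonpos_of_nonpos_of_nonneg (not_lt.1 hcon) htq.le]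
  have htsq : (t ^ (-(1 / (2 * β)))) ^ 2 = T⁻¹ := by
    rw [hTdef, ← Real.rpow_natCast, ← Real.rpow_mul ht.le, ← Real.rpow_neg ht.le]
    congr 1; push_cast; field_simp
  have htT : T ^ β = t := by
    rw [hTdef, ← Real.rpow_mul ht.le, one_div_mul_cancel hβ0.ne', Real.rpow_one]
  set l : ℝ := ρ ^ 2 / (4 * T) with hl
  have hl0 : 0 < l := by positivity
  have hlL : L ≤ l := by
    have h1 : (2 * max L 1) ^ 2 ≤ (ρ * t ^ (-(1 / (2 * β)))) ^ 2 :=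
      pow_le_pow_left₀ (by positivity) hR 2
    rw [mul_pow ρ, htsq] at h1
    have h2 : ρ ^ 2 * T⁻¹ = 4 * l := by rw [hl]; field_simp
    nlinarith [le_max_left L 1]
  have key := hL l hlL
  have hp : pS t x y = (Real.pi * ρ ^ 2) ^ (-a) *
      ∫ s in Ioi (0:ℝ), (s / l) ^ (-a) * Real.exp (-(s / l)⁻¹) ∂μ := by
    rw [hpS t ht x y, ← integral_const_mul]
    refine setIntegral_congr_fun measurableSet_Ioi fun s (hs : 0 < s) => ?_
    rw [← hTdef, ← hρ, ← mul_assoc (_ ^ (-a)), ← Real.mul_rpow (by positivity) (by positivity)]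
    congr 2
    · rw [hl]; field_simp
    · rw [hl]; field_simp
  have hD : β * 4 ^ β * Real.Gamma (a + β) / (Real.pi ^ a * Real.Gamma (1 - β)) *
      (ρ ^ (-((d:ℝ) + 2 * β)) * t) =
      (Real.pi * ρ ^ 2) ^ (-a) * (l ^ β)⁻¹ * (β / Real.Gamma (1 - β) * Real.Gamma (a + β)) := by
    have e1 : ρ ^ (-((d:ℝ) + 2 * β)) = (ρ ^ 2) ^ (-a) * ((ρ ^ 2) ^ β)⁻¹ := by
      rw [← Real.rpow_neg (by positivity), ← Real.rpow_natCast, ← Real.rpow_mul hρ0.le,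
        ← Real.rpow_mul hρ0.le, ← Real.rpow_add hρ0]
      congr 1; push_cast; rw [had]; ring
    rw [e1, hl, Real.div_rpow (by positivity) (by positivity), Real.mul_rpow (by norm_num) hT0.le,
      htT, Real.mul_rpow Real.pi_pos.le (by positivity), Real.rpow_neg Real.pi_pos.le]
    field_simp
  rw [Real.dist_eq] at key
  rw [hp, hD]
  have hA : (Real.pi * ρ ^ 2) ^ (-a) ≠ 0 := (Real.rpow_pos_of_pos (by positivity) _).ne'
  have hlβ : l ^ β ≠ 0 := (Real.rpow_pos_of_pos hl0 _).ne'
  refine le_of_eq_of_le ?_ key.le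
  congr 2
  field_simp
end

section
/- Let p^{S^{-1}}(t,x,y) = ∫_{(0,∞)} (4π t^β s^{-β})^{-d/2} exp(-|x-y|² s^β/(4 t^β)) μ_β(ds) be the Gaussian kernel on ℝ^d time-changed by an inverse β-stable subordinator. Then, as |x-y|^{-2/β} t → ∞: if d = 1, p^{S^{-1}}(t,x,y) ∼ (1/(2Γ(1-β/2))) t^{-β/2}; if d = 2, p^{S^{-1}}(t,x,y) ∼ (β/(4π Γ(1-β))) t^{-β} log(|x-y|^{-2/β} t); and if d ≥ 3, p^{S^{-1}}(t,x,y) ∼ (Γ(d/2 - 1)/(4 π^{d/2} Γ(1-β))) |x-y|^{2-d} t^{-β}. Here '∼ as |x-y|^{-2/β} t → ∞' means: for every ε > 0 there exists R > 0 such that whenever t > 0, x ≠ y ∈ ℝ^d and |x-y|^{-2/β} t ≥ R, the ratio of the two sides lies within ε of 1. -/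
/-!
Write `Y = s ^ β` under `μ`, `z = |x - y| ^ (-2/β) t` and `l = z ^ (-β) / 4 = |x - y|² / (4 t ^ β)`.
The kernel then equals `(4 π t ^ β) ^ (-d/2) Φ_{d/2}(l)` with `Φ_a(l) = E[Y ^ a exp(-l Y)]`
(`gaussMoment`, `kernel_eq_gaussMoment`), so the claim concerns the behaviour of `Φ_{d/2}` at `0`.

For `d = 1`, `Φ_{1/2}(l)` converges to the fractional moment `E[s ^ (β/2)] = √π / Γ(1 - β/2)`, which
is finite and computed by Tonelli from the Laplace transform and
`∫ (1 - e^{-rs}) r ^ (-1-p) dr = s ^ p Γ(1-p) / p` (`integrable_rpow_and_integral`).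

For `d ≥ 2` the moment `E[Y ^ (d/2)]` is infinite, and the rate comes from the tail of `Y`, namely
`y P(Y > y) → 1 / Γ(1-β)`. This is a Tauberian statement, proved in Karamata's way: the measures
`r ^ (-β) (1 - e^{-rs}) μ(ds)`, tested against the powers of `e^{-rs}`, converge as `r → 0` to
`(n+1) ^ β - n ^ β`, the moments of the Lévy measure `β / Γ(1-β) u ^ (-1-β) du` weighted by
`1 - e^{-u}`; by the Weierstrass approximation theorem they converge against every continuous
function of `e^{-rs}` (`tendsto_weighted`), and squeezing an indicator between
continuous functions gives the tail (`tendsto_tail`). A Chebyshev inequality gives the uniform bound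
`y P(Y > y) ≤ (1 - e^{-1})⁻¹` (`tail_le`).

By Fubini, `Φ_a(l) = l ^ (-a) ∫ (a v ^ (a-1) - v ^ a) e^{-v} P(Y > v/l) dv` for `a ≥ 1`
(`gaussMoment_eq`), to which dominated convergence applies. For `a = d/2 > 1`, replacing
`P(Y > v/l)` by `l / (v Γ(1-β))` yields `l ^ (a-1) Φ_a(l) → Γ(a-1) / Γ(1-β)`
(`tendsto_tail_integral_high`). For `a = 1` this replacement diverges logarithmically at `v = 0`;
putting `l = e^{-ℓ} / 4` and `v = e^{ℓ (θ-1)} / 4`, so that `v / l = e^{ℓ θ}`, the integrand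
becomes `ℓ` times a function of `θ` which tends to `1 / Γ(1-β)` on `(0, 1)` and to `0` off `[0, 1]`,
whence `Φ_1(l) ~ ℓ / Γ(1-β)` (`tendsto_tail_integral_log`).
-/

open MeasureTheory Set
open Filter Topology

/-! ### The integrals of `(1 - exp (-c u)) u ^ (-1 - p)` -/

theorem integrableOn_one_sub_exp_mul_rpow {p : ℝ} (hp0 : 0 < p) (hp1 : p < 1) :
    IntegrableOn (fun u : ℝ => (1 - Real.exp (-u)) * u ^ (-1 - p)) (Ioi 0) := by
  have hmeas : Measurable (fun u : ℝ => (1 - Real.exp (-u)) * u ^ (-1 - p)) := by fun_prop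
  rw [← Ioc_union_Ioi_eq_Ioi zero_le_one]
  refine IntegrableOn.union ?_ ?_
  · have h1 : IntegrableOn (fun u : ℝ => u ^ (-p)) (Ioc 0 1) :=
      (intervalIntegrable_iff_integrableOn_Ioc_of_le zero_le_one).1
        (intervalIntegral.intervalIntegrable_rpow' (by linarith))
    refine h1.mono' hmeas.aestronglyMeasurable ?_
    filter_upwards [ae_restrict_mem measurableSet_Ioc] with u hu
    have h2 := Real.one_sub_le_exp_neg u
    have h3 : Real.exp (-u) ≤ 1 := Real.exp_le_one_iff.2 (by linarith [hu.1])
    rw [Real.norm_of_nonneg (mul_nonneg (by linarith) (Real.rpow_nonneg hu.1.le _))]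
    calc (1 - Real.exp (-u)) * u ^ (-1 - p) ≤ u ^ (1 : ℝ) * u ^ (-1 - p) := by
          rw [Real.rpow_one]
          exact mul_le_mul_of_nonneg_right (by linarith) (Real.rpow_nonneg hu.1.le _)
      _ = u ^ (-p) := by rw [← Real.rpow_add hu.1]; congr 1; ring
  · have h1 : IntegrableOn (fun u : ℝ => u ^ (-1 - p)) (Ioi 1) :=
      integrableOn_Ioi_rpow_of_lt (by linarith) one_pos
    refine h1.mono' hmeas.aestronglyMeasurable ?_
    filter_upwards [ae_restrict_mem measurableSet_Ioi] with u hu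
    have hu0 : (0 : ℝ) < u := lt_trans one_pos hu
    have h3 : Real.exp (-u) ≤ 1 := Real.exp_le_one_iff.2 (by linarith)
    rw [Real.norm_of_nonneg (mul_nonneg (by linarith) (Real.rpow_nonneg hu0.le _))]
    exact mul_le_of_le_one_left (Real.rpow_nonneg hu0.le _) (by linarith [Real.exp_pos (-u)])

/-- Integration by parts against `u ^ (-p)` turns this into the Gamma integral at `1 - p`. The
boundary terms vanish at `0` because `p < 1` and at `∞` because `0 < p`. -/
theorem integral_one_sub_exp_mul_rpow {p : ℝ} (hp0 : 0 < p) (hp1 : p < 1) :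
    ∫ u in Ioi (0 : ℝ), (1 - Real.exp (-u)) * u ^ (-1 - p) = Real.Gamma (1 - p) / p := by
  have hG : IntegrableOn (fun u : ℝ => Real.exp (-u) * u ^ (1 - p - 1)) (Ioi 0) :=
    Real.GammaIntegral_convergent (by linarith)
  have hI := integrableOn_one_sub_exp_mul_rpow hp0 hp1
  have key := integral_Ioi_of_hasDerivAt_of_tendsto (a := (0 : ℝ)) (m := 0)
    (f := fun u : ℝ => (1 - Real.exp (-u)) * u ^ (-p))
    (f' := fun u : ℝ => Real.exp (-u) * u ^ (1 - p - 1) - p * ((1 - Real.exp (-u)) * u ^ (-1 - p)))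
    ?_ ?_ (hG.sub (hI.const_mul p)) ?_
  · rw [integral_sub hG (hI.const_mul p), integral_const_mul,
      ← Real.Gamma_eq_integral (by linarith)] at key
    rw [eq_div_iff hp0.ne']
    simp only [neg_zero, Real.exp_zero, sub_self, zero_mul] at key
    linarith
  · have h0 : Tendsto (fun u : ℝ => u ^ (1 - p)) (𝓝[≥] 0) (𝓝 0) := by
      have := (Real.continuousAt_rpow_const (0 : ℝ) (1 - p) (Or.inr (by linarith))).tendsto
      rw [Real.zero_rpow (by linarith)] at this
      exact this.mono_left nhdsWithin_le_nhds
    unfold ContinuousWithinAt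
    simp only [neg_zero, Real.exp_zero, sub_self, zero_mul]
    refine squeeze_zero' (g := fun u : ℝ => u ^ (1 - p)) ?_ ?_ h0
    · filter_upwards [self_mem_nhdsWithin] with u hu
      have hu : 0 ≤ u := hu
      have h3 : Real.exp (-u) ≤ 1 := Real.exp_le_one_iff.2 (by linarith)
      exact mul_nonneg (by linarith) (Real.rpow_nonneg hu _)
    · filter_upwards [self_mem_nhdsWithin] with u hu
      rcases eq_or_lt_of_le (show (0 : ℝ) ≤ u from hu) with rfl | hu
      · simp [Real.zero_rpow (show 1 - p ≠ 0 by linarith)]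
      · have h2 := Real.one_sub_le_exp_neg u
        calc (1 - Real.exp (-u)) * u ^ (-p) ≤ u ^ (1 : ℝ) * u ^ (-p) := by
              rw [Real.rpow_one]
              exact mul_le_mul_of_nonneg_right (by linarith) (Real.rpow_nonneg hu.le _)
          _ = u ^ (1 - p) := by rw [← Real.rpow_add hu]; congr 1
  · intro u hu
    have hu : 0 < u := hu
    have h1 : HasDerivAt (fun u : ℝ => 1 - Real.exp (-u)) (Real.exp (-u)) u := by
      simpa using ((hasDerivAt_neg u).exp.const_sub 1)
    have h2 := Real.hasDerivAt_rpow_const (x := u) (p := -p) (Or.inl hu.ne')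
    refine (h1.mul h2).congr_deriv ?_
    rw [show 1 - p - 1 = -p by ring, show -1 - p = -p - 1 by ring]; ring
  · have h0 := tendsto_rpow_neg_atTop hp0
    refine squeeze_zero' (g := fun u : ℝ => u ^ (-p)) ?_ ?_ h0
    · filter_upwards [eventually_ge_atTop 0] with u hu
      have h3 : Real.exp (-u) ≤ 1 := Real.exp_le_one_iff.2 (by linarith)
      exact mul_nonneg (by linarith) (Real.rpow_nonneg hu _)
    · filter_upwards [eventually_ge_atTop 0] with u hu
      exact mul_le_of_le_one_left (Real.rpow_nonneg hu _) (by linarith [Real.exp_pos (-u)])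

/-- The value follows from `c = 1` by scaling; for `c = 0` both sides vanish since `0 ^ p = 0`. -/
theorem one_sub_exp_scaled {p c : ℝ} (hp0 : 0 < p) (hp1 : p < 1) (hc : 0 ≤ c) :
    IntegrableOn (fun u : ℝ => (1 - Real.exp (-(c * u))) * u ^ (-1 - p)) (Ioi 0) ∧
    ∫ u in Ioi (0 : ℝ), (1 - Real.exp (-(c * u))) * u ^ (-1 - p) =
      c ^ p * (Real.Gamma (1 - p) / p) := by
  rcases hc.eq_or_lt with rfl | hc
  · simp [Real.zero_rpow hp0.ne']
  have hI := integrableOn_one_sub_exp_mul_rpow hp0 hp1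
  have hJ := integral_one_sub_exp_mul_rpow hp0 hp1
  have e : EqOn (fun u : ℝ => c ^ (1 + p) * ((1 - Real.exp (-(c * u))) * (c * u) ^ (-1 - p)))
      (fun u : ℝ => (1 - Real.exp (-(c * u))) * u ^ (-1 - p)) (Ioi 0) := by
    intro u hu
    have hu : 0 < u := hu
    simp only
    rw [Real.mul_rpow hc.le hu.le, show -1 - p = -(1 + p) by ring, Real.rpow_neg hc.le]
    have := Real.rpow_pos_of_pos hc (1 + p)
    field_simp
  constructor
  · have h1 := (integrableOn_Ioi_comp_mul_left_iff
      (fun u : ℝ => (1 - Real.exp (-u)) * u ^ (-1 - p)) 0 hc).2 (by simpa using hI)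
    exact IntegrableOn.congr_fun (h1.const_mul (c ^ (1 + p))) e measurableSet_Ioi
  · rw [← setIntegral_congr_fun measurableSet_Ioi e, integral_const_mul]
    have h1 := integral_comp_mul_left_Ioi
      (fun u : ℝ => (1 - Real.exp (-u)) * u ^ (-1 - p)) 0 hc
    rw [h1, mul_zero, hJ, smul_eq_mul, Real.rpow_add hc, Real.rpow_one]
    field_simp

/-! ### Weak convergence from moments on the unit interval -/

/-- An integrable weight `k`, nonnegative a.e., and a variable `w` with values a.e. in `[0, 1]`. They
encode the finite measure on `[0, 1]` that is the image of `k μ` under `w`, so that its integral of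
`g` is `∫ k (g ∘ w) dμ`. -/
def AdmissiblePair {α : Type*} [MeasurableSpace α] (μ : Measure α) (k w : α → ℝ) : Prop :=
  Integrable k μ ∧ AEStronglyMeasurable w μ ∧ ∀ᵐ a ∂μ, 0 ≤ k a ∧ w a ∈ Icc (0 : ℝ) 1

theorem AdmissiblePair.integrable {α : Type*} [MeasurableSpace α] {μ : Measure α} {k w : α → ℝ}
    (H : AdmissiblePair μ k w) {g : ℝ → ℝ} (hg : Continuous g) :
    Integrable (fun a => k a * g (w a)) μ := by
  obtain ⟨C, hC⟩ := isCompact_Icc.exists_bound_of_continuousOn (s := Icc (0 : ℝ) 1) hg.continuousOn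
  refine H.1.mul_bdd (c := C) (hg.comp_aestronglyMeasurable H.2.1) ?_
  filter_upwards [H.2.2] with a ha using hC _ ha.2

theorem AdmissiblePair.abs_integral_le {α : Type*} [MeasurableSpace α] {μ : Measure α}
    {k w : α → ℝ} (H : AdmissiblePair μ k w) {g : ℝ → ℝ} {ε : ℝ}
    (hb : ∀ x ∈ Icc (0 : ℝ) 1, |g x| ≤ ε) :
    |∫ a, k a * g (w a) ∂μ| ≤ ε * ∫ a, k a ∂μ := by
  rw [← integral_const_mul, ← Real.norm_eq_abs]
  refine norm_integral_le_of_norm_le (H.1.const_mul ε) ?_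
  filter_upwards [H.2.2] with a ha
  rw [norm_mul, Real.norm_of_nonneg ha.1, mul_comm]
  exact mul_le_mul_of_nonneg_right (hb _ ha.2) ha.1

theorem AdmissiblePair.abs_sub_le {α : Type*} [MeasurableSpace α] {μ : Measure α}
    {k w : α → ℝ} (H : AdmissiblePair μ k w) {g h : ℝ → ℝ} (hg : Continuous g)
    (hh : Continuous h) {ε : ℝ} (hb : ∀ x ∈ Icc (0 : ℝ) 1, |g x - h x| ≤ ε) :
    |∫ a, k a * g (w a) ∂μ - ∫ a, k a * h (w a) ∂μ| ≤ ε * ∫ a, k a ∂μ := by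
  rw [← integral_sub (H.integrable hg) (H.integrable hh)]
  simp only [← mul_sub]
  exact H.abs_integral_le (g := fun x => g x - h x) hb

/-- Convergence of all moments of finite measures on `[0, 1]` implies convergence against every
continuous function: by linearity it holds for polynomials, which approximate continuous functions
uniformly on `[0, 1]`, while the total masses stay bounded (moment `0`). -/
theorem tendsto_integral_of_moments {ι α γ : Type*} {l : Filter ι} [MeasurableSpace α]
    [MeasurableSpace γ] {μ : Measure α} {ν : Measure γ} {k w : ι → α → ℝ} {k₀ w₀ : γ → ℝ}
    (H : ∀ᶠ i in l, AdmissiblePair μ (k i) (w i)) (H₀ : AdmissiblePair ν k₀ w₀)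
    (hmom : ∀ n : ℕ, Tendsto (fun i => ∫ a, k i a * w i a ^ n ∂μ) l
      (𝓝 (∫ a, k₀ a * w₀ a ^ n ∂ν)))
    {h : ℝ → ℝ} (hh : Continuous h) :
    Tendsto (fun i => ∫ a, k i a * h (w i a) ∂μ) l (𝓝 (∫ a, k₀ a * h (w₀ a) ∂ν)) := by
  have hpoly : ∀ P : Polynomial ℝ, Tendsto (fun i => ∫ a, k i a * P.eval (w i a) ∂μ) l
      (𝓝 (∫ a, k₀ a * P.eval (w₀ a) ∂ν)) := by
    intro P
    induction P using Polynomial.induction_on' with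
    | add P Q hP hQ =>
      have e0 : ∫ a, k₀ a * (P + Q).eval (w₀ a) ∂ν =
          ∫ a, k₀ a * P.eval (w₀ a) ∂ν + ∫ a, k₀ a * Q.eval (w₀ a) ∂ν := by
        rw [← integral_add (H₀.integrable P.continuous) (H₀.integrable Q.continuous)]
        simp [mul_add]
      rw [e0]
      refine (hP.add hQ).congr' ?_
      filter_upwards [H] with i Hi
      rw [← integral_add (Hi.integrable P.continuous) (Hi.integrable Q.continuous)]
      simp [mul_add]
    | monomial n c =>
      have := (hmom n).const_mul c
      simp only [Polynomial.eval_monomial, mul_left_comm _ c, integral_const_mul]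
      exact this
  have hmass : Tendsto (fun i => ∫ a, k i a ∂μ) l (𝓝 (∫ a, k₀ a ∂ν)) := by
    simpa using hmom 0
  set M := ∫ a, k₀ a ∂ν with hM
  have hM0 : 0 ≤ M := integral_nonneg_of_ae (H₀.2.2.mono fun a ha => ha.1)
  rw [Metric.tendsto_nhds]
  intro ε hε
  set δ := ε / (4 * (M + 1)) with hδ
  have hδ0 : 0 < δ := by positivity
  have hδM : δ * (M + 1) = ε / 4 := by rw [hδ]; field_simp
  obtain ⟨P, hP⟩ := exists_polynomial_near_of_continuousOn 0 1 h hh.continuousOn δ hδ0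
  have hP' : ∀ x ∈ Icc (0 : ℝ) 1, |h x - P.eval x| ≤ δ := fun x hx => by
    rw [abs_sub_comm]; exact (hP x hx).le
  have s0 := H₀.abs_sub_le hh P.continuous hP'
  filter_upwards [H, Metric.tendsto_nhds.1 (hpoly P) (ε / 4) (by positivity),
    hmass.eventually_lt_const (lt_add_one M)] with i Hi h1 h2
  have s1 := Hi.abs_sub_le hh P.continuous hP'
  rw [Real.dist_eq] at h1 ⊢
  have h3 : δ * ∫ a, k i a ∂μ ≤ δ * (M + 1) := mul_le_mul_of_nonneg_left h2.le hδ0.le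
  have h4 : δ * M ≤ δ * (M + 1) := mul_le_mul_of_nonneg_left (by linarith) hδ0.le
  rw [abs_le] at s0 s1
  rw [abs_lt] at h1 ⊢
  constructor <;> linarith [s0.1, s0.2, s1.1, s1.2, h1.1, h1.2]

/-! ### The tail of the stable law -/

section Tail

variable {β : ℝ} {μ : Measure ℝ} [IsProbabilityMeasure μ]

theorem integrable_exp_neg_mul (hpos : ∀ᵐ s ∂μ, 0 < s) {r : ℝ} (hr : 0 ≤ r) :
    Integrable (fun s => Real.exp (-(r * s))) μ := by
  refine Integrable.of_bound (by fun_prop) 1 ?_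
  filter_upwards [hpos] with s hs
  rw [Real.norm_of_nonneg (Real.exp_pos _).le]
  exact Real.exp_le_one_iff.2 (by nlinarith [mul_nonneg hr hs.le])

/-- The Laplace transform identity extends to `r = 0`, which is the total mass. -/
theorem laplace_nonneg (hβ0 : 0 < β)
    (hlap : ∀ r : ℝ, 0 < r → ∫ s, Real.exp (-(r * s)) ∂μ = Real.exp (-(r ^ β)))
    {r : ℝ} (hr : 0 ≤ r) : ∫ s, Real.exp (-(r * s)) ∂μ = Real.exp (-(r ^ β)) := by
  rcases hr.eq_or_lt with rfl | hr
  · simp [Real.zero_rpow hβ0.ne']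
  · exact hlap r hr

theorem tendsto_one_sub_exp_div (hβ0 : 0 < β) {c : ℝ} (hc : 0 ≤ c) :
    Tendsto (fun r : ℝ => r ^ (-β) * (1 - Real.exp (-((c * r) ^ β)))) (𝓝[>] 0) (𝓝 (c ^ β)) := by
  have h1 : HasDerivAt (fun x : ℝ => 1 - Real.exp (-(c ^ β * x))) (c ^ β) 0 := by
    have := (((hasDerivAt_id (0 : ℝ)).const_mul (c ^ β)).neg.exp.const_sub 1)
    simpa using this
  have h2 := h1.tendsto_slope_zero_right
  have h3 : Tendsto (fun r : ℝ => r ^ β) (𝓝[>] 0) (𝓝[>] 0) := by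
    refine tendsto_nhdsWithin_iff.2 ⟨?_, ?_⟩
    · have := (Real.continuousAt_rpow_const (0 : ℝ) β (Or.inr hβ0.le)).tendsto
      rw [Real.zero_rpow hβ0.ne'] at this
      exact this.mono_left nhdsWithin_le_nhds
    · filter_upwards [self_mem_nhdsWithin] with r hr using Real.rpow_pos_of_pos hr _
  refine (h2.comp h3).congr' ?_
  filter_upwards [self_mem_nhdsWithin] with r hr
  have hr : 0 < r := hr
  simp [Real.mul_rpow hc hr.le, Real.rpow_neg hr.le]

/-- A Chebyshev bound: `1 - exp (-r s)` is at least `1 - exp (-1)` where `r s > 1`, and its mean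
`1 - exp (-r ^ β)` is at most `r ^ β`. -/
theorem tail_le (hpos : ∀ᵐ s ∂μ, 0 < s)
    (hlap : ∀ r : ℝ, 0 < r → ∫ s, Real.exp (-(r * s)) ∂μ = Real.exp (-(r ^ β)))
    {r : ℝ} (hr : 0 < r) :
    r ^ (-β) * μ.real {s | 1 < r * s} ≤ (1 - Real.exp (-1))⁻¹ := by
  have he : 0 < 1 - Real.exp (-1) := by
    have : Real.exp (-1) < 1 := Real.exp_lt_one_iff.2 (by norm_num)
    linarith
  have hm : MeasurableSet {s : ℝ | 1 < r * s} := measurableSet_lt (by fun_prop) (by fun_prop)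
  have h1 : (1 - Real.exp (-1)) * μ.real {s | 1 < r * s} ≤ 1 - Real.exp (-(r ^ β)) := by
    have hi := integrable_exp_neg_mul hpos hr.le
    have e1 : 1 - Real.exp (-(r ^ β)) = ∫ s, (1 - Real.exp (-(r * s))) ∂μ := by
      rw [integral_sub (integrable_const _) hi, hlap r hr]; simp
    have e2 : (1 - Real.exp (-1)) * μ.real {s | 1 < r * s} =
        ∫ s, {s | 1 < r * s}.indicator (fun _ => 1 - Real.exp (-1)) s ∂μ := by
      rw [integral_indicator_const _ hm, smul_eq_mul, mul_comm]
    rw [e1, e2]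
    refine integral_mono_ae ((integrable_const _).indicator hm) ((integrable_const _).sub hi) ?_
    filter_upwards [hpos] with s hs
    by_cases h : 1 < r * s
    · simp only [indicator, mem_ofPred_eq, h, if_true]
      have : Real.exp (-(r * s)) ≤ Real.exp (-1) := Real.exp_le_exp.2 (by linarith)
      linarith
    · simp only [indicator, mem_ofPred_eq, h, if_false]
      have : Real.exp (-(r * s)) ≤ 1 :=
        Real.exp_le_one_iff.2 (by nlinarith [mul_pos hr hs])
      linarith
  have h2 := Real.one_sub_le_exp_neg (r ^ β)
  have h3 : 0 < r ^ β := Real.rpow_pos_of_pos hr _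
  rw [Real.rpow_neg hr.le, inv_mul_le_iff₀ h3, ← div_eq_mul_inv, le_div_iff₀ he]
  linarith

/-- As `r → 0`, the measures `r ^ (-β) μ(du / r)`, weighted by `1 - exp (-u)` in the variable
`u = r s`, converge to the equally weighted Lévy measure `β / Γ(1-β) u ^ (-1-β) du`, against
continuous functions of `exp (-u)`. The `n`-th moments converge to `(n+1) ^ β - n ^ β`. -/
theorem tendsto_weighted_s7 (hβ0 : 0 < β) (hβ1 : β < 1) (hpos : ∀ᵐ s ∂μ, 0 < s)
    (hlap : ∀ r : ℝ, 0 < r → ∫ s, Real.exp (-(r * s)) ∂μ = Real.exp (-(r ^ β)))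
    {h : ℝ → ℝ} (hh : Continuous h) :
    Tendsto (fun r : ℝ => ∫ s, r ^ (-β) * (1 - Real.exp (-(r * s))) * h (Real.exp (-(r * s))) ∂μ)
      (𝓝[>] 0)
      (𝓝 (∫ u in Ioi (0 : ℝ), β / Real.Gamma (1 - β) * ((1 - Real.exp (-u)) * u ^ (-1 - β)) *
        h (Real.exp (-u)))) := by
  have hΓ : 0 < Real.Gamma (1 - β) := Real.Gamma_pos_of_pos (by linarith)
  refine tendsto_integral_of_moments
    (k := fun r s => r ^ (-β) * (1 - Real.exp (-(r * s))))
    (w := fun r s => Real.exp (-(r * s)))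
    (k₀ := fun u => β / Real.Gamma (1 - β) * ((1 - Real.exp (-u)) * u ^ (-1 - β)))
    (w₀ := fun u => Real.exp (-u)) ?_ ?_ ?_ hh
  · filter_upwards [self_mem_nhdsWithin] with r hr
    have hr : 0 < r := hr
    refine ⟨((integrable_const _).sub (integrable_exp_neg_mul hpos hr.le)).const_mul _,
      by fun_prop, ?_⟩
    filter_upwards [hpos] with s hs
    have h3 : Real.exp (-(r * s)) ≤ 1 := Real.exp_le_one_iff.2 (by nlinarith [mul_pos hr hs])
    exact ⟨mul_nonneg (Real.rpow_nonneg hr.le _) (by linarith), (Real.exp_pos _).le, h3⟩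
  · refine ⟨(integrableOn_one_sub_exp_mul_rpow hβ0 hβ1).const_mul _, by fun_prop, ?_⟩
    filter_upwards [ae_restrict_mem measurableSet_Ioi] with u hu
    have hu : 0 < u := hu
    have h3 : Real.exp (-u) ≤ 1 := Real.exp_le_one_iff.2 (by linarith)
    exact ⟨mul_nonneg (by positivity) (mul_nonneg (by linarith) (Real.rpow_nonneg hu.le _)),
      (Real.exp_pos _).le, h3⟩
  · intro n
    -- both moments telescope into a difference of two Laplace-type integrals
    have hn : (0 : ℝ) ≤ n := n.cast_nonneg
    have hn1 : (0 : ℝ) ≤ (n : ℝ) + 1 := by positivity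
    obtain ⟨i0, e0⟩ := one_sub_exp_scaled hβ0 hβ1 hn
    obtain ⟨i1, e1⟩ := one_sub_exp_scaled hβ0 hβ1 hn1
    have lim : ∫ u in Ioi (0 : ℝ), β / Real.Gamma (1 - β) * ((1 - Real.exp (-u)) * u ^ (-1 - β)) *
        Real.exp (-u) ^ n = ((n : ℝ) + 1) ^ β - (n : ℝ) ^ β := by
      have : ∀ u : ℝ, β / Real.Gamma (1 - β) * ((1 - Real.exp (-u)) * u ^ (-1 - β)) *
          Real.exp (-u) ^ n = β / Real.Gamma (1 - β) *
          ((1 - Real.exp (-((n + 1 : ℝ) * u))) * u ^ (-1 - β) -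
            (1 - Real.exp (-(n * u))) * u ^ (-1 - β)) := by
        intro u
        rw [← Real.exp_nat_mul, show -((n + 1 : ℝ) * u) = n * -u + -u by ring, Real.exp_add,
          show -(n * u) = n * -u by ring]
        ring
      simp only [this]
      rw [integral_const_mul, integral_sub i1 i0, e0, e1]
      field_simp
    rw [lim]
    refine ((tendsto_one_sub_exp_div hβ0 hn1).sub (tendsto_one_sub_exp_div hβ0 hn)).congr' ?_
    filter_upwards [self_mem_nhdsWithin] with r hr
    have hr : 0 < r := hr
    have : ∀ s : ℝ, r ^ (-β) * (1 - Real.exp (-(r * s))) * Real.exp (-(r * s)) ^ n =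
        r ^ (-β) * (Real.exp (-(n * r * s)) - Real.exp (-((n + 1) * r * s))) := by
      intro s
      rw [← Real.exp_nat_mul, show -((n + 1 : ℝ) * r * s) = n * -(r * s) + -(r * s) by ring,
        Real.exp_add, show -(n * r * s) = n * -(r * s) by ring]
      ring
    simp only [this]
    rw [integral_const_mul, integral_sub (integrable_exp_neg_mul hpos (by positivity))
      (integrable_exp_neg_mul hpos (by positivity)), laplace_nonneg hβ0 hlap (by positivity),
      laplace_nonneg hβ0 hlap (by positivity)]
    ring

/-- A continuous function of `exp (-u)` which, multiplied by the weight `1 - exp (-u)`, lies between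
the indicators of `(b, ∞)` and `(a, ∞)`. -/
theorem exists_cutoff {a b : ℝ} (ha : 0 < a) (hab : a < b) :
    ∃ h : ℝ → ℝ, Continuous h ∧ ∀ u : ℝ, 0 < u →
      (Ioi b).indicator 1 u ≤ (1 - Real.exp (-u)) * h (Real.exp (-u)) ∧
      (1 - Real.exp (-u)) * h (Real.exp (-u)) ≤ (Ioi a).indicator (1 : ℝ → ℝ) u := by
  set A := Real.exp (-a) with hA
  set B := Real.exp (-b) with hB
  have hAB : B < A := Real.exp_lt_exp.2 (by linarith)
  have hA1 : A < 1 := Real.exp_lt_one_iff.2 (by linarith)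
  -- the numerator vanishes for `w ≥ A`, so the denominator may be frozen at `1 - A` there
  refine ⟨fun w => max 0 (min 1 ((A - w) / (A - B))) / max (1 - w) (1 - A), ?_, ?_⟩
  · refine Continuous.div (by fun_prop) (by fun_prop) fun w => ?_
    exact (lt_of_lt_of_le (by linarith : 0 < 1 - A) (le_max_right _ _)).ne'
  · intro u hu
    have hu1 : Real.exp (-u) < 1 := Real.exp_lt_one_iff.2 (by linarith)
    have key : (1 - Real.exp (-u)) * (max 0 (min 1 ((A - Real.exp (-u)) / (A - B))) /
        max (1 - Real.exp (-u)) (1 - A)) = max 0 (min 1 ((A - Real.exp (-u)) / (A - B))) := by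
      rcases le_total (Real.exp (-u)) A with h | h
      · rw [max_eq_left (a := 1 - Real.exp (-u)) (by linarith)]
        have : 1 - Real.exp (-u) ≠ 0 := by linarith
        field_simp
      · have : (A - Real.exp (-u)) / (A - B) ≤ 0 :=
          div_nonpos_of_nonpos_of_nonneg (by linarith) (by linarith)
        rw [max_eq_left (a := (0 : ℝ)) ((min_le_right _ _).trans this)]
        simp
    simp only [key]
    constructor
    · by_cases h : b < u
      · have h' : Real.exp (-u) ≤ B := Real.exp_le_exp.2 (by linarith)
        have : 1 ≤ (A - Real.exp (-u)) / (A - B) := by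
          rw [le_div_iff₀ (by linarith)]; linarith
        simp [indicator, h, this]
      · simp [indicator, h]
    · by_cases h : a < u
      · simp [indicator, h]
      · have h' : A ≤ Real.exp (-u) := Real.exp_le_exp.2 (by linarith)
        have : (A - Real.exp (-u)) / (A - B) ≤ 0 :=
          div_nonpos_of_nonpos_of_nonneg (by linarith) (by linarith)
        rw [max_eq_left (a := (0 : ℝ)) ((min_le_right _ _).trans this)]
        simp [indicator, h]

/-- The mass that the Lévy measure `β / Γ(1-β) u ^ (-1-β) du` gives to `(a, ∞)`. -/
theorem integral_levy_tail (hβ0 : 0 < β) {a : ℝ} (ha : 0 < a) :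
    IntegrableOn (fun u : ℝ => β / Real.Gamma (1 - β) * u ^ (-1 - β) *
      (Ioi a).indicator (1 : ℝ → ℝ) u) (Ioi 0) ∧
    ∫ u in Ioi (0 : ℝ), β / Real.Gamma (1 - β) * u ^ (-1 - β) * (Ioi a).indicator (1 : ℝ → ℝ) u =
      1 / Real.Gamma (1 - β) * a ^ (-β) := by
  have e : (fun u : ℝ => β / Real.Gamma (1 - β) * u ^ (-1 - β) * (Ioi a).indicator (1 : ℝ → ℝ) u) =
      (Ioi a).indicator (fun u : ℝ => β / Real.Gamma (1 - β) * u ^ (-1 - β)) := by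
    ext u; by_cases h : a < u <;> simp [indicator, h]
  rw [e]
  constructor
  · exact ((integrable_indicator_iff measurableSet_Ioi).2
      ((integrableOn_Ioi_rpow_of_lt (by linarith) ha).const_mul _)).integrableOn
  · rw [setIntegral_indicator measurableSet_Ioi, Ioi_inter_Ioi, sup_eq_right.2 ha.le,
      integral_const_mul, integral_Ioi_rpow_of_lt (by linarith) ha,
      show -1 - β + 1 = -β by ring]
    field_simp

/-- The tail asymptotics `μ(s > 1/r) ~ r ^ β / Γ(1-β)` as `r → 0`: the indicator of `(1, ∞)` is
squeezed between cutoffs, and the Lévy mass of `(b, ∞)` is continuous in `b` at `1`. -/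
theorem tendsto_tail (hβ0 : 0 < β) (hβ1 : β < 1) (hpos : ∀ᵐ s ∂μ, 0 < s)
    (hlap : ∀ r : ℝ, 0 < r → ∫ s, Real.exp (-(r * s)) ∂μ = Real.exp (-(r ^ β))) :
    Tendsto (fun r : ℝ => r ^ (-β) * μ.real {s | 1 < r * s}) (𝓝[>] 0)
      (𝓝 (1 / Real.Gamma (1 - β))) := by
  have hΓ : 0 < Real.Gamma (1 - β) := Real.Gamma_pos_of_pos (by linarith)
  have hm : ∀ r c : ℝ, MeasurableSet {s : ℝ | c < r * s} := fun r c =>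
    measurableSet_lt (by fun_prop) (by fun_prop)
  have hcont : Tendsto (fun x : ℝ => 1 / Real.Gamma (1 - β) * x ^ (-β)) (𝓝 1)
      (𝓝 (1 / Real.Gamma (1 - β))) := by
    have := (Real.continuousAt_rpow_const (1 : ℝ) (-β) (Or.inl one_ne_zero)).tendsto.const_mul
      (1 / Real.Gamma (1 - β))
    simpa using this
  have kint : ∀ {h : ℝ → ℝ}, Continuous h → ∀ r : ℝ, 0 < r → Integrable (fun s =>
      r ^ (-β) * (1 - Real.exp (-(r * s))) * h (Real.exp (-(r * s)))) μ := by
    intro h hh r hr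
    refine AdmissiblePair.integrable (k := fun s => r ^ (-β) * (1 - Real.exp (-(r * s))))
      (w := fun s => Real.exp (-(r * s))) ⟨?_, by fun_prop, ?_⟩ hh
    · exact ((integrable_const _).sub (integrable_exp_neg_mul hpos hr.le)).const_mul _
    · filter_upwards [hpos] with s hs
      have h3 : Real.exp (-(r * s)) ≤ 1 := Real.exp_le_one_iff.2 (by nlinarith [mul_pos hr hs])
      exact ⟨mul_nonneg (Real.rpow_nonneg hr.le _) (by linarith), (Real.exp_pos _).le, h3⟩
  have k0int : ∀ {h : ℝ → ℝ}, Continuous h → IntegrableOn (fun u =>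
      β / Real.Gamma (1 - β) * ((1 - Real.exp (-u)) * u ^ (-1 - β)) * h (Real.exp (-u)))
      (Ioi 0) := by
    intro h hh
    refine AdmissiblePair.integrable
      (k := fun u => β / Real.Gamma (1 - β) * ((1 - Real.exp (-u)) * u ^ (-1 - β)))
      (w := fun u => Real.exp (-u)) ⟨?_, by fun_prop, ?_⟩ hh
    · exact (integrableOn_one_sub_exp_mul_rpow hβ0 hβ1).const_mul _
    · filter_upwards [ae_restrict_mem measurableSet_Ioi] with u hu
      have hu : 0 < u := hu
      have h3 : Real.exp (-u) ≤ 1 := Real.exp_le_one_iff.2 (by linarith)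
      exact ⟨mul_nonneg (by positivity) (mul_nonneg (by linarith) (Real.rpow_nonneg hu.le _)),
        (Real.exp_pos _).le, h3⟩
  have tailint : ∀ r c : ℝ, r ^ (-β) * μ.real {s | c < r * s} =
      ∫ s, {s | c < r * s}.indicator (fun _ => r ^ (-β)) s ∂μ := by
    intro r c
    rw [integral_indicator_const _ (hm r c), smul_eq_mul, mul_comm]
  rw [tendsto_order]
  constructor
  · intro κ hκ
    -- lower bound: a cutoff between `(b, ∞)` and `(1, ∞)` with `b` slightly above `1`
    obtain ⟨b, hb, hb1⟩ := ((hcont.eventually (lt_mem_nhds hκ)).filter_mono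
      (nhdsWithin_le_nhds (s := Ioi 1)) |>.and eventually_mem_nhdsWithin).exists
    have hb1 : 1 < b := hb1
    obtain ⟨h, hh, hcut⟩ := exists_cutoff one_pos hb1
    have lim := tendsto_weighted_s7 hβ0 hβ1 hpos hlap hh
    have lb : κ < ∫ u in Ioi (0 : ℝ), β / Real.Gamma (1 - β) *
        ((1 - Real.exp (-u)) * u ^ (-1 - β)) * h (Real.exp (-u)) := by
      obtain ⟨ti, te⟩ := integral_levy_tail hβ0 (β := β) (a := b) (by linarith)
      refine hb.trans_le (te ▸ ?_)
      refine setIntegral_mono_on ti (k0int hh) measurableSet_Ioi fun u hu => ?_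
      have hu : 0 < u := hu
      have := mul_le_mul_of_nonneg_left (hcut u hu).1
        (show 0 ≤ β / Real.Gamma (1 - β) * u ^ (-1 - β) by positivity)
      linarith
    filter_upwards [lim.eventually (lt_mem_nhds lb), self_mem_nhdsWithin] with r h1 hr
    have hr : 0 < r := hr
    refine h1.trans_le ?_
    rw [tailint]
    refine integral_mono_ae (kint hh r hr) ((integrable_const _).indicator (hm r 1)) ?_
    filter_upwards [hpos] with s hs
    have := mul_le_mul_of_nonneg_left (hcut (r * s) (mul_pos hr hs)).2
        (show 0 ≤ r ^ (-β) by positivity)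
    by_cases h : 1 < r * s <;> simp [indicator, h] at this ⊢ <;> linarith
  · intro κ hκ
    -- upper bound: a cutoff between `(1, ∞)` and `(b, ∞)` with `b` slightly below `1`
    obtain ⟨b, hb, hb1, hb0⟩ := ((hcont.eventually (gt_mem_nhds hκ)).filter_mono
      (nhdsWithin_le_nhds (s := Iio 1)) |>.and (eventually_mem_nhdsWithin.and
        ((lt_mem_nhds (zero_lt_one' ℝ)).filter_mono nhdsWithin_le_nhds))).exists
    have hb1 : b < 1 := hb1
    have hb0 : 0 < b := hb0
    obtain ⟨h, hh, hcut⟩ := exists_cutoff hb0 hb1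
    have lim := tendsto_weighted_s7 hβ0 hβ1 hpos hlap hh
    have lb : ∫ u in Ioi (0 : ℝ), β / Real.Gamma (1 - β) *
        ((1 - Real.exp (-u)) * u ^ (-1 - β)) * h (Real.exp (-u)) < κ := by
      obtain ⟨ti, te⟩ := integral_levy_tail hβ0 (β := β) (a := b) hb0
      refine lt_of_le_of_lt (te ▸ ?_) hb
      refine setIntegral_mono_on (k0int hh) ti measurableSet_Ioi fun u hu => ?_
      have hu : 0 < u := hu
      have := mul_le_mul_of_nonneg_left (hcut u hu).2
        (show 0 ≤ β / Real.Gamma (1 - β) * u ^ (-1 - β) by positivity)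
      linarith
    filter_upwards [lim.eventually (gt_mem_nhds lb), self_mem_nhdsWithin] with r h1 hr
    have hr : 0 < r := hr
    refine lt_of_le_of_lt ?_ h1
    rw [tailint]
    refine integral_mono_ae ((integrable_const _).indicator (hm r 1)) (kint hh r hr) ?_
    filter_upwards [hpos] with s hs
    have := mul_le_mul_of_nonneg_left (hcut (r * s) (mul_pos hr hs)).1
        (show 0 ≤ r ^ (-β) by positivity)
    by_cases h : 1 < r * s <;> simp [indicator, h] at this ⊢ <;> linarith

end Tail

/-! ### Fractional moments -/

/-- The moment of order `p < β` of the stable law. Integrating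
`∫ (1 - exp (-r s)) μ(ds) = 1 - exp (-r ^ β)` against `r ^ (-1-p) dr` and exchanging the integrals
gives `Γ(1-p)/p ∫ s ^ p μ(ds) = Γ(1-p/β)/p`; Tonelli also gives finiteness. -/
theorem integrable_rpow_and_integral {β p : ℝ} {μ : Measure ℝ} [IsProbabilityMeasure μ]
    (hp0 : 0 < p) (hpβ : p < β) (hβ1 : β < 1) (hpos : ∀ᵐ s ∂μ, 0 < s)
    (hlap : ∀ r : ℝ, 0 < r → ∫ s, Real.exp (-(r * s)) ∂μ = Real.exp (-(r ^ β))) :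
    Integrable (fun s => s ^ p) μ ∧
      ∫ s, s ^ p ∂μ = Real.Gamma (1 - p / β) / Real.Gamma (1 - p) := by
  have hβ0 : 0 < β := hp0.trans hpβ
  have hq0 : 0 < p / β := by positivity
  have hq1 : p / β < 1 := (div_lt_one hβ0).2 hpβ
  have hp1 : p < 1 := hpβ.trans hβ1
  have hΓ : 0 < Real.Gamma (1 - p) := Real.Gamma_pos_of_pos (by linarith)
  -- the substitution `v = r ^ β` in the integral against `r`
  have e : EqOn (fun r : ℝ => β⁻¹ * ((|β| * r ^ (β - 1)) •
      ((1 - Real.exp (-(r ^ β))) * (r ^ β) ^ (-1 - p / β))))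
      (fun r : ℝ => (1 - Real.exp (-(r ^ β))) * r ^ (-1 - p)) (Ioi 0) := by
    intro r hr
    have hr : 0 < r := hr
    simp only [smul_eq_mul, abs_of_pos hβ0]
    rw [← Real.rpow_mul hr.le, show r ^ (-1 - p) = r ^ (β - 1) * r ^ (β * (-1 - p / β)) by
      rw [← Real.rpow_add hr]; congr 1; field_simp; ring]
    field_simp
  have hint : IntegrableOn (fun r : ℝ => (1 - Real.exp (-(r ^ β))) * r ^ (-1 - p)) (Ioi 0) :=
    IntegrableOn.congr_fun (((integrableOn_Ioi_comp_rpow_iff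
      (fun v : ℝ => (1 - Real.exp (-v)) * v ^ (-1 - p / β)) hβ0.ne').2
      (integrableOn_one_sub_exp_mul_rpow hq0 hq1)).const_mul β⁻¹) e measurableSet_Ioi
  have hval : ∫ r in Ioi (0 : ℝ), (1 - Real.exp (-(r ^ β))) * r ^ (-1 - p) =
      Real.Gamma (1 - p / β) / p := by
    rw [← setIntegral_congr_fun measurableSet_Ioi e, integral_const_mul,
      integral_comp_rpow_Ioi (fun v : ℝ => (1 - Real.exp (-v)) * v ^ (-1 - p / β)) hβ0.ne',
      integral_one_sub_exp_mul_rpow hq0 hq1]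
    field_simp
  have inner : ∀ r : ℝ, 0 < r → Integrable (fun s => (1 - Real.exp (-(r * s))) * r ^ (-1 - p)) μ ∧
      ∫ s, (1 - Real.exp (-(r * s))) * r ^ (-1 - p) ∂μ =
        (1 - Real.exp (-(r ^ β))) * r ^ (-1 - p) := by
    intro r hr
    have hi := integrable_exp_neg_mul hpos hr.le
    refine ⟨((integrable_const _).sub hi).mul_const _, ?_⟩
    rw [integral_mul_const, integral_sub (integrable_const _) hi, hlap r hr]; simp
  have hprod : Integrable (Function.uncurry fun s r : ℝ =>
      (1 - Real.exp (-(r * s))) * r ^ (-1 - p)) (μ.prod (volume.restrict (Ioi 0))) := by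
    rw [integrable_prod_iff' (by
      refine Measurable.aestronglyMeasurable ?_
      unfold Function.uncurry; fun_prop)]
    refine ⟨?_, hint.congr ?_⟩
    · filter_upwards [ae_restrict_mem measurableSet_Ioi] with r hr using (inner r hr).1
    · filter_upwards [ae_restrict_mem measurableSet_Ioi] with r hr
      have hr : 0 < r := hr
      rw [← (inner r hr).2]
      refine integral_congr_ae ?_
      filter_upwards [hpos] with s hs
      have h3 : Real.exp (-(r * s)) ≤ 1 := Real.exp_le_one_iff.2 (by nlinarith [mul_pos hr hs])
      exact (Real.norm_of_nonneg (mul_nonneg (by linarith) (Real.rpow_nonneg hr.le _))).symm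
  have hae : (fun s : ℝ => ∫ r in Ioi (0 : ℝ), (1 - Real.exp (-(r * s))) * r ^ (-1 - p)) =ᵐ[μ]
      fun s => Real.Gamma (1 - p) / p * s ^ p := by
    filter_upwards [hpos] with s hs
    rw [mul_comm (Real.Gamma (1 - p) / p), ← (one_sub_exp_scaled hp0 hp1 hs.le).2]
    simp only [mul_comm s]
  have hc : Real.Gamma (1 - p) / p ≠ 0 := by positivity
  have hi := (hprod.integral_prod_left).congr hae
  refine ⟨(integrable_const_mul_iff hc.isUnit _).1 hi, ?_⟩
  have sw := integral_integral_swap hprod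
  rw [integral_congr_ae hae, integral_const_mul, setIntegral_congr_fun measurableSet_Ioi
    (fun r hr => (inner r hr).2), hval] at sw
  field_simp at sw ⊢
  linarith

/-! ### The layer-cake formula -/

theorem integrableOn_exp_mul_rpow_sub {a : ℝ} (ha : 1 ≤ a) :
    IntegrableOn (fun v : ℝ => (a * v ^ (a - 1) - v ^ a) * Real.exp (-v)) (Ioi 0) := by
  have h1 := (Real.GammaIntegral_convergent (s := a) (by linarith)).const_mul a
  have h2 := Real.GammaIntegral_convergent (s := a + 1) (by linarith)
  refine (h1.sub h2).congr (Eventually.of_forall fun v => ?_)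
  simp only [Pi.sub_apply, add_sub_cancel_right]
  ring

/-- The layer-cake formula for `z ^ a exp (-z)`, whose derivative is
`(a z ^ (a-1) - z ^ a) exp (-z)` and which vanishes at `0`. The derivative changes sign, so Fubini is
used in place of Tonelli. -/
theorem integral_rpow_mul_exp_eq {Ω : Type*} [MeasurableSpace Ω] {P : Measure Ω}
    [IsProbabilityMeasure P] {Z : Ω → ℝ} (hZ : Measurable Z) (hpos : ∀ᵐ ω ∂P, 0 < Z ω)
    {a : ℝ} (ha : 1 ≤ a) :
    ∫ ω, Z ω ^ a * Real.exp (-Z ω) ∂P =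
      ∫ v in Ioi (0 : ℝ), (a * v ^ (a - 1) - v ^ a) * Real.exp (-v) * P.real {ω | v < Z ω} := by
  set g : ℝ → ℝ := fun v => (a * v ^ (a - 1) - v ^ a) * Real.exp (-v) with hg
  have hgi : IntegrableOn g (Ioi 0) := integrableOn_exp_mul_rpow_sub ha
  have hgc : Continuous g := by
    have h1 : Continuous fun v : ℝ => v ^ (a - 1) :=
      continuous_id.rpow_const fun _ => Or.inr (by linarith)
    have h2 : Continuous fun v : ℝ => v ^ a :=
      continuous_id.rpow_const fun _ => Or.inr (by linarith)
    fun_prop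
  have hm : MeasurableSet {q : Ω × ℝ | q.2 < Z q.1} :=
    measurableSet_lt measurable_snd (hZ.comp measurable_fst)
  have hprod : Integrable (Function.uncurry fun (ω : Ω) (v : ℝ) =>
      {v | v < Z ω}.indicator g v) (P.prod (volume.restrict (Ioi 0))) :=
    ((Integrable.comp_snd hgi P).indicator hm).congr (Eventually.of_forall fun q => rfl)
  have sw := integral_integral_swap hprod
  have e1 : ∫ ω, Z ω ^ a * Real.exp (-Z ω) ∂P =
      ∫ ω, (∫ v in Ioi (0 : ℝ), {v | v < Z ω}.indicator g v) ∂P := by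
    refine integral_congr_ae ?_
    filter_upwards [hpos] with ω hω
    have hd : ∀ v ∈ Ioo 0 (Z ω), HasDerivAt (fun v : ℝ => v ^ a * Real.exp (-v)) (g v) v := by
      intro v _
      have h1 := Real.hasDerivAt_rpow_const (x := v) (p := a) (Or.inr ha)
      refine (h1.mul (hasDerivAt_neg v).exp).congr_deriv ?_
      simp only [hg]; ring
    have hFc : Continuous fun v : ℝ => v ^ a * Real.exp (-v) := by
      have h2 : Continuous fun v : ℝ => v ^ a :=
        continuous_id.rpow_const fun _ => Or.inr (by linarith)
      fun_prop
    have ftc := intervalIntegral.integral_eq_sub_of_hasDerivAt_of_le hω.le hFc.continuousOn hd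
      (hgc.intervalIntegrable _ _)
    rw [intervalIntegral.integral_of_le hω.le, integral_Ioc_eq_integral_Ioo] at ftc
    have hms : MeasurableSet {v : ℝ | v < Z ω} := measurableSet_lt measurable_id measurable_const
    rw [setIntegral_indicator hms, show Ioi (0 : ℝ) ∩ {v | v < Z ω} = Ioo 0 (Z ω) from rfl, ftc,
      Real.zero_rpow (by linarith)]
    ring
  rw [e1, sw]
  refine integral_congr_ae (Eventually.of_forall fun v => ?_)
  have : ∀ ω, {v | v < Z ω}.indicator g v = {ω | v < Z ω}.indicator (fun _ => g v) ω :=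
    fun ω => rfl
  simp only [this]
  rw [integral_indicator_const _ (measurableSet_lt measurable_const hZ), smul_eq_mul, mul_comm]

/-! ### Integrals against a tail of order `1 / y` -/

section TailAsymptotics

variable {U : ℝ → ℝ} {C L : ℝ}

/-- Here `U` plays the role of the tail `P(Y > y)`. Writing the integrand as
`(a v ^ (a-2) - v ^ (a-1)) exp (-v)` times `(v/l) U(v/l)`, the second factor is bounded and tends
to `L`, and the first integrates to `a Γ(a-1) - Γ(a) = Γ(a-1)`. -/
theorem tendsto_tail_integral_high (hU : Antitone U) (hU0 : ∀ y, 0 ≤ U y)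
    (hUC : ∀ y, 0 < y → y * U y ≤ C) (hUL : Tendsto (fun y => y * U y) atTop (𝓝 L))
    {a : ℝ} (ha : 1 < a) :
    Tendsto (fun l : ℝ => l⁻¹ * ∫ v in Ioi (0 : ℝ),
        (a * v ^ (a - 1) - v ^ a) * Real.exp (-v) * U (v / l)) (𝓝[>] 0)
      (𝓝 (L * Real.Gamma (a - 1))) := by
  have hG1 := (Real.GammaIntegral_convergent (s := a - 1) (by linarith)).const_mul a
  have hG2 := Real.GammaIntegral_convergent (s := a) (by linarith)
  set G : ℝ → ℝ := fun v => a * (Real.exp (-v) * v ^ (a - 1 - 1)) - Real.exp (-v) * v ^ (a - 1)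
    with hG
  have lim : ∫ v in Ioi (0 : ℝ), G v * L = L * Real.Gamma (a - 1) := by
    rw [integral_mul_const, integral_sub hG1 hG2, integral_const_mul,
      ← Real.Gamma_eq_integral (by linarith), ← Real.Gamma_eq_integral (by linarith)]
    have := Real.Gamma_add_one (s := a - 1) (by linarith)
    rw [sub_add_cancel] at this
    rw [this]; ring
  rw [← lim]
  have D := tendsto_integral_filter_of_dominated_convergence (μ := volume.restrict (Ioi (0 : ℝ)))
    (l := 𝓝[>] (0 : ℝ)) (F := fun l v => G v * (v / l * U (v / l))) (f := fun v => G v * L)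
    (fun v => (a * (Real.exp (-v) * v ^ (a - 1 - 1)) + Real.exp (-v) * v ^ (a - 1)) * C)
    ?_ ?_ ((hG1.add hG2).mul_const C) ?_
  · refine D.congr' ?_
    filter_upwards [self_mem_nhdsWithin] with l hl
    have hl : 0 < l := hl
    rw [← integral_const_mul]
    refine setIntegral_congr_fun measurableSet_Ioi fun v hv => ?_
    have hv : 0 < v := hv
    simp only [hG]
    rw [show v ^ (a - 1) = v ^ (a - 1 - 1) * v by
        rw [← Real.rpow_add_one hv.ne']; congr 1; ring,
      show v ^ a = v ^ (a - 1 - 1) * v * v by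
        rw [← Real.rpow_add_one hv.ne', ← Real.rpow_add_one hv.ne']; congr 1; ring]
    field_simp
  · filter_upwards with l
    have := hU.measurable
    refine Measurable.aestronglyMeasurable ?_
    fun_prop
  · filter_upwards [self_mem_nhdsWithin] with l hl
    have hl : 0 < l := hl
    filter_upwards [ae_restrict_mem measurableSet_Ioi] with v hv
    have hv : 0 < v := hv
    have hvl : 0 < v / l := by positivity
    have h1 : 0 ≤ v / l * U (v / l) := mul_nonneg hvl.le (hU0 _)
    rw [norm_mul, Real.norm_of_nonneg h1]
    refine mul_le_mul ?_ (hUC _ hvl) h1 (by positivity)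
    refine (norm_sub_le _ _).trans (le_of_eq ?_)
    rw [Real.norm_of_nonneg (by positivity), Real.norm_of_nonneg (by positivity)]
  · filter_upwards [ae_restrict_mem measurableSet_Ioi] with v hv
    have hv : 0 < v := hv
    have : Tendsto (fun l : ℝ => v / l) (𝓝[>] 0) atTop := by
      simpa only [div_eq_mul_inv] using tendsto_inv_nhdsGT_zero.const_mul_atTop hv
    exact (hUL.comp this).const_mul _

theorem abs_one_sub_mul_exp_neg_le_one {v : ℝ} (hv : 0 < v) : |(1 - v) * Real.exp (-v)| ≤ 1 := by
  rw [abs_mul, abs_of_pos (Real.exp_pos _), Real.exp_neg, ← div_eq_mul_inv,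
    div_le_one (Real.exp_pos _), abs_le]
  have := Real.add_one_le_exp v
  constructor <;> linarith

theorem abs_one_sub_mul_exp_neg_le {v : ℝ} (hv : 0 < v) :
    |(1 - v) * Real.exp (-v)| ≤ 2 / v := by
  rw [abs_mul, abs_of_pos (Real.exp_pos _), Real.exp_neg, ← div_eq_mul_inv,
    div_le_div_iff₀ (Real.exp_pos _) hv]
  have := Real.quadratic_le_exp_of_nonneg hv.le
  have h : |1 - v| ≤ 1 + v := by rw [abs_le]; constructor <;> linarith
  nlinarith [mul_le_mul_of_nonneg_right h hv.le]

theorem exp_neg_abs_le (x : ℝ) : Real.exp (-|x|) ≤ 2 * (1 + x ^ 2)⁻¹ := by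
  have := Real.quadratic_le_exp_of_nonneg (abs_nonneg x)
  rw [sq_abs] at this
  rw [Real.exp_neg, ← div_eq_mul_inv, inv_le_comm₀ (Real.exp_pos _) (by positivity), inv_div]
  linarith [abs_nonneg x]

/-- The borderline case `a = 1` with `l = exp (-ℓ) / 4`. The change of variable
`v = exp (ℓ (θ - 1)) / 4` gives `v / l = exp (ℓ θ)` and `dv = ℓ v dθ`, which absorbs the factor `ℓ⁻¹`.
The integrand tends to `L` for `0 < θ < 1`, where `v → 0` and `v / l → ∞`. It tends to `0` for
`θ < 0` since `U ≤ 1` and `exp (ℓ θ) → 0`, and for `θ > 1` since `(1 - v) exp (-v) → 0`.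
The factor `1/4` matches `l = z ^ (-β) / 4` with `ℓ = β log z`. -/
theorem tendsto_tail_integral_log (hU : Antitone U) (hU0 : ∀ y, 0 ≤ U y) (hU1 : ∀ y, U y ≤ 1)
    (hC : 1 ≤ C)
    (hUC : ∀ y, 0 < y → y * U y ≤ C) (hUL : Tendsto (fun y => y * U y) atTop (𝓝 L)) :
    Tendsto (fun ℓ : ℝ => ℓ⁻¹ * ((Real.exp (-ℓ) / 4)⁻¹ * ∫ v in Ioi (0 : ℝ),
        (1 - v) * Real.exp (-v) * U (v / (Real.exp (-ℓ) / 4)))) atTop (𝓝 L) := by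
  set V : ℝ → ℝ → ℝ := fun ℓ θ => Real.exp (ℓ * (θ - 1)) / 4 with hV
  have hVpos : ∀ ℓ θ, 0 < V ℓ θ := fun ℓ θ => by positivity
  have cov : ∀ ℓ : ℝ, 0 < ℓ → ℓ⁻¹ * ((Real.exp (-ℓ) / 4)⁻¹ * ∫ v in Ioi (0 : ℝ),
        (1 - v) * Real.exp (-v) * U (v / (Real.exp (-ℓ) / 4))) =
      ∫ θ, (1 - V ℓ θ) * Real.exp (-V ℓ θ) * (Real.exp (ℓ * θ) * U (Real.exp (ℓ * θ))) := by
    intro ℓ hℓ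
    have im : V ℓ '' univ = Ioi 0 := by
      ext v
      simp only [image_univ, mem_range, mem_Ioi]
      constructor
      · rintro ⟨θ, rfl⟩; exact hVpos _ _
      · intro hv
        refine ⟨1 + ℓ⁻¹ * Real.log (4 * v), ?_⟩
        simp only [hV]
        rw [add_sub_cancel_left, mul_inv_cancel_left₀ hℓ.ne', Real.exp_log (by positivity)]
        ring
    have inj : InjOn (V ℓ) univ := by
      intro x _ y _ hxy
      have h1 : Real.exp (ℓ * (x - 1)) = Real.exp (ℓ * (y - 1)) := by
        simp only [hV] at hxy; linarith
      have h2 := mul_left_cancel₀ hℓ.ne' (Real.exp_injective h1)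
      linarith
    have der : ∀ θ ∈ (univ : Set ℝ), HasDerivWithinAt (V ℓ) (V ℓ θ * ℓ) univ θ := by
      intro θ _
      have := ((((hasDerivAt_id θ).sub_const 1).const_mul ℓ).exp.div_const 4)
      refine HasDerivAt.hasDerivWithinAt (this.congr_deriv ?_)
      simp only [hV, id]; ring
    rw [← im, integral_image_eq_integral_abs_deriv_smul MeasurableSet.univ der inj,
      Measure.restrict_univ, ← integral_const_mul, ← integral_const_mul]
    refine integral_congr_ae (Eventually.of_forall fun θ => ?_)
    have e1 : V ℓ θ / (Real.exp (-ℓ) / 4) = Real.exp (ℓ * θ) := by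
      simp only [hV]
      rw [div_div_div_cancel_right₀ (by norm_num), ← Real.exp_sub]
      congr 1; ring
    have e2 : (Real.exp (-ℓ) / 4)⁻¹ * V ℓ θ = Real.exp (ℓ * θ) := by
      rw [← e1, div_eq_mul_inv (V ℓ θ), mul_comm]
    simp only [smul_eq_mul]
    rw [e1, abs_of_pos (mul_pos (hVpos _ _) hℓ), ← e2]
    field_simp
  have lim : ∫ θ, (Ioo (0 : ℝ) 1).indicator (fun _ => L) θ = L := by
    rw [integral_indicator_const _ measurableSet_Ioo]; simp
  have hUm := hU.measurable
  have D := tendsto_integral_filter_of_dominated_convergence (μ := (volume : Measure ℝ))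
    (l := (atTop : Filter ℝ))
    (F := fun ℓ θ => (1 - V ℓ θ) * Real.exp (-V ℓ θ) * (Real.exp (ℓ * θ) * U (Real.exp (ℓ * θ))))
    (f := (Ioo (0 : ℝ) 1).indicator (fun _ => L))
    (fun θ => 8 * C * Real.exp 1 * (2 * (1 + θ ^ 2)⁻¹))
    ?_ ?_ ((integrable_inv_one_add_sq.const_mul 2).const_mul _) ?_
  · rw [lim] at D
    refine D.congr' ?_
    filter_upwards [eventually_gt_atTop 0] with ℓ hℓ using (cov ℓ hℓ).symm
  · filter_upwards with ℓ
    refine Measurable.aestronglyMeasurable ?_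
    simp only [hV]
    fun_prop
  · filter_upwards [eventually_ge_atTop 1] with ℓ hℓ
    filter_upwards with θ
    -- for `ℓ ≥ 1` the integrand is dominated by a multiple of `exp (-|θ|)`
    refine le_trans ?_ (mul_le_mul_of_nonneg_left (exp_neg_abs_le θ) (by positivity))
    have hy : 0 < Real.exp (ℓ * θ) := Real.exp_pos _
    have h0 : 0 ≤ Real.exp (ℓ * θ) * U (Real.exp (ℓ * θ)) := mul_nonneg hy.le (hU0 _)
    have b1 := abs_one_sub_mul_exp_neg_le_one (hVpos ℓ θ)
    have b2 := abs_one_sub_mul_exp_neg_le (hVpos ℓ θ)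
    have c1 := hUC _ hy
    have he : (1 : ℝ) ≤ Real.exp 1 := Real.one_le_exp (by norm_num)
    rw [norm_mul, Real.norm_of_nonneg h0, Real.norm_eq_abs, mul_assoc (8 * C), ← Real.exp_add]
    rcases lt_or_ge θ 0 with hθ | hθ
    · rw [abs_of_neg hθ, neg_neg]
      have c2 : Real.exp (ℓ * θ) * U (Real.exp (ℓ * θ)) ≤ Real.exp (1 + θ) :=
        (mul_le_of_le_one_right hy.le (hU1 _)).trans (Real.exp_le_exp.2 (by nlinarith))
      calc _ ≤ 1 * Real.exp (1 + θ) := mul_le_mul b1 c2 h0 zero_le_one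
        _ ≤ 8 * C * Real.exp (1 + θ) :=
          mul_le_mul_of_nonneg_right (by linarith) (Real.exp_pos _).le
    · rw [abs_of_nonneg hθ]
      rcases le_or_gt θ 1 with hθ1 | hθ1
      · have : 1 ≤ Real.exp (1 + -θ) := Real.one_le_exp (by linarith)
        calc _ ≤ 1 * C := mul_le_mul b1 c1 h0 zero_le_one
          _ ≤ 8 * C * Real.exp (1 + -θ) := by nlinarith
      · have b3 : 2 / V ℓ θ ≤ 8 * Real.exp (1 + -θ) := by
          rw [div_le_iff₀ (hVpos _ _)]
          simp only [hV]
          rw [show 8 * Real.exp (1 + -θ) * (Real.exp (ℓ * (θ - 1)) / 4) =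
            2 * (Real.exp (1 + -θ) * Real.exp (ℓ * (θ - 1))) by ring, ← Real.exp_add]
          have := Real.one_le_exp (x := 1 + -θ + ℓ * (θ - 1)) (by nlinarith)
          linarith
        calc _ ≤ (8 * Real.exp (1 + -θ)) * C := mul_le_mul (b2.trans b3) c1 h0 (by positivity)
          _ = 8 * C * Real.exp (1 + -θ) := by ring
  · -- the endpoints `0` and `1` form a null set
    have hne : ∀ᵐ θ : ℝ, θ ≠ 0 ∧ θ ≠ 1 := by
      filter_upwards [Measure.ae_ne volume (0 : ℝ), Measure.ae_ne volume (1 : ℝ)] with θ h0 h1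
      exact ⟨h0, h1⟩
    filter_upwards [hne] with θ hθ
    have hy : ∀ ℓ, 0 < Real.exp (ℓ * θ) := fun ℓ => Real.exp_pos _
    rcases lt_or_gt_of_ne hθ.1 with h0 | h0
    · have hz : Tendsto (fun ℓ : ℝ => Real.exp (ℓ * θ)) atTop (𝓝 0) :=
        Real.tendsto_exp_atBot.comp (tendsto_id.atTop_mul_const_of_neg h0)
      rw [indicator_of_notMem (fun h => absurd h.1 (by linarith))]
      refine squeeze_zero_norm (fun ℓ => ?_) hz
      have hh : 0 ≤ Real.exp (ℓ * θ) * U (Real.exp (ℓ * θ)) := mul_nonneg (hy ℓ).le (hU0 _)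
      rw [norm_mul, Real.norm_of_nonneg hh, Real.norm_eq_abs]
      calc _ ≤ 1 * Real.exp (ℓ * θ) := mul_le_mul (abs_one_sub_mul_exp_neg_le_one (hVpos ℓ θ))
            (mul_le_of_le_one_right (hy ℓ).le (hU1 _)) hh zero_le_one
        _ = _ := one_mul _
    · have hyU := hUL.comp (Real.tendsto_exp_atTop.comp (tendsto_id.atTop_mul_const h0))
      rcases lt_or_gt_of_ne hθ.2 with h1 | h1
      · rw [indicator_of_mem (show θ ∈ Ioo (0 : ℝ) 1 from ⟨h0, h1⟩)]
        have hv : Tendsto (fun ℓ : ℝ => V ℓ θ) atTop (𝓝 0) := by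
          have := (Real.tendsto_exp_atBot.comp
            ((tendsto_id (α := ℝ)).atTop_mul_const_of_neg (show θ - 1 < 0 by linarith))).div_const 4
          simpa [Function.comp_def] using this
        have hc : Tendsto (fun v : ℝ => (1 - v) * Real.exp (-v)) (𝓝 0) (𝓝 1) := by
          have : Continuous (fun v : ℝ => (1 - v) * Real.exp (-v)) := by fun_prop
          simpa using this.tendsto 0
        simpa [Function.comp_def] using (hc.comp hv).mul hyU
      · rw [indicator_of_notMem (fun h => absurd h.2 (by linarith))]
        have hv : Tendsto (fun ℓ : ℝ => V ℓ θ) atTop atTop :=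
          (Real.tendsto_exp_atTop.comp
            ((tendsto_id (α := ℝ)).atTop_mul_const (show 0 < θ - 1 by linarith))).atTop_div_const
            (by norm_num)
        have hc : Tendsto (fun ℓ => 2 / V ℓ θ * C) atTop (𝓝 0) := by
          simpa using (hv.const_div_atTop 2).mul_const C
        refine squeeze_zero_norm (fun ℓ => ?_) hc
        have hh : 0 ≤ Real.exp (ℓ * θ) * U (Real.exp (ℓ * θ)) := mul_nonneg (hy ℓ).le (hU0 _)
        rw [norm_mul, Real.norm_of_nonneg hh, Real.norm_eq_abs]
        exact mul_le_mul (abs_one_sub_mul_exp_neg_le (hVpos ℓ θ)) (hUC _ (hy ℓ)) hh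
          (div_pos two_pos (hVpos _ _)).le

end TailAsymptotics

/-! ### The functions `Φ_a` and their behaviour at the origin -/

/-- `Φ_a(l) = E[Y ^ a exp (-l Y)]` for `Y = s ^ β` with `s` distributed according to `μ`. -/
noncomputable def gaussMoment (β : ℝ) (μ : Measure ℝ) (a l : ℝ) : ℝ :=
  ∫ s, (s ^ β) ^ a * Real.exp (-(l * s ^ β)) ∂μ

/-- The tail of `s ^ β` at `y`, normalised by `y`, is the tail of `s` at `1 / r`, normalised by
`r ^ (-β)`, for `r = y ^ (-1/β)`. -/
theorem mul_tail_eq {β : ℝ} {μ : Measure ℝ} (hβ0 : 0 < β) (hpos : ∀ᵐ s ∂μ, 0 < s)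
    {y : ℝ} (hy : 0 < y) :
    y * μ.real {s | y < s ^ β} =
      (y ^ (-(1 / β))) ^ (-β) * μ.real {s | 1 < y ^ (-(1 / β)) * s} := by
  have h1 : (y ^ (-(1 / β))) ^ (-β) = y := by
    rw [← Real.rpow_mul hy.le, show -(1 / β) * -β = 1 by field_simp, Real.rpow_one]
  rw [h1]
  congr 1
  refine measureReal_congr ?_
  filter_upwards [hpos] with s hs
  refine propext ?_
  change y < s ^ β ↔ 1 < y ^ (-(1 / β)) * s
  rw [Real.rpow_neg hy.le, inv_mul_eq_div, one_lt_div (by positivity), one_div,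
    Real.rpow_inv_lt_iff_of_pos hy.le hs.le hβ0]

section Moments

variable {β : ℝ} {μ : Measure ℝ} [IsProbabilityMeasure μ]

/-- The layer-cake formula for `l s ^ β`. -/
theorem gaussMoment_eq (hpos : ∀ᵐ s ∂μ, 0 < s) {a l : ℝ} (ha : 1 ≤ a) (hl : 0 < l) :
    gaussMoment β μ a l = l ^ (-a) * ∫ v in Ioi (0 : ℝ),
      (a * v ^ (a - 1) - v ^ a) * Real.exp (-v) * μ.real {s | v / l < s ^ β} := by
  have hZ : ∀ᵐ s ∂μ, 0 < l * s ^ β := by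
    filter_upwards [hpos] with s hs using by positivity
  have key := integral_rpow_mul_exp_eq (P := μ) (Z := fun s => l * s ^ β) (by fun_prop) hZ ha
  simp only [div_lt_iff₀' hl]
  rw [← key, gaussMoment, ← integral_const_mul]
  refine integral_congr_ae ?_
  filter_upwards [hpos] with s hs
  have hb : 0 ≤ s ^ β := by positivity
  have hla : 0 < l ^ a := by positivity
  rw [Real.mul_rpow hl.le hb, Real.rpow_neg hl.le]
  field_simp

theorem antitone_tail : Antitone fun y : ℝ => μ.real {s : ℝ | y < s ^ β} := fun _ _ h =>
  measureReal_mono fun _ hs => lt_of_le_of_lt h hs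

theorem tendsto_mul_tail (hβ0 : 0 < β) (hβ1 : β < 1) (hpos : ∀ᵐ s ∂μ, 0 < s)
    (hlap : ∀ r : ℝ, 0 < r → ∫ s, Real.exp (-(r * s)) ∂μ = Real.exp (-(r ^ β))) :
    Tendsto (fun y : ℝ => y * μ.real {s | y < s ^ β}) atTop (𝓝 (1 / Real.Gamma (1 - β))) := by
  have hr : Tendsto (fun y : ℝ => y ^ (-(1 / β))) atTop (𝓝[>] 0) := by
    refine tendsto_nhdsWithin_iff.2 ⟨tendsto_rpow_neg_atTop (by positivity), ?_⟩
    filter_upwards [eventually_gt_atTop 0] with y hy using Real.rpow_pos_of_pos hy _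
  refine ((tendsto_tail hβ0 hβ1 hpos hlap).comp hr).congr' ?_
  filter_upwards [eventually_gt_atTop 0] with y hy using (mul_tail_eq hβ0 hpos hy).symm

theorem mul_tail_le (hβ0 : 0 < β) (hpos : ∀ᵐ s ∂μ, 0 < s)
    (hlap : ∀ r : ℝ, 0 < r → ∫ s, Real.exp (-(r * s)) ∂μ = Real.exp (-(r ^ β)))
    (y : ℝ) (hy : 0 < y) : y * μ.real {s | y < s ^ β} ≤ (1 - Real.exp (-1))⁻¹ := by
  rw [mul_tail_eq hβ0 hpos hy]
  exact tail_le hpos hlap (Real.rpow_pos_of_pos hy _)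

/-- For exponent `1/2` the limit at `0` is the finite moment `∫ s ^ (β/2) dμ`. -/
theorem tendsto_gaussMoment_half (hβ0 : 0 < β) (hβ1 : β < 1) (hpos : ∀ᵐ s ∂μ, 0 < s)
    (hlap : ∀ r : ℝ, 0 < r → ∫ s, Real.exp (-(r * s)) ∂μ = Real.exp (-(r ^ β))) :
    Tendsto (gaussMoment β μ (1 / 2)) (𝓝[>] 0)
      (𝓝 (√Real.pi / Real.Gamma (1 - β / 2))) := by
  obtain ⟨hi, he⟩ := integrable_rpow_and_integral (p := β / 2) (by positivity) (by linarith) hβ1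
    hpos hlap
  rw [show 1 - β / 2 / β = 1 / 2 by field_simp; norm_num, Real.Gamma_one_half_eq] at he
  rw [← he]
  refine tendsto_integral_filter_of_dominated_convergence (fun s => s ^ (β / 2)) ?_ ?_ hi ?_
  · filter_upwards with l
    exact Measurable.aestronglyMeasurable (by fun_prop)
  · filter_upwards [self_mem_nhdsWithin] with l hl
    have hl : 0 < l := hl
    filter_upwards [hpos] with s hs
    have hb : 0 < s ^ β := by positivity
    rw [Real.norm_of_nonneg (by positivity), ← Real.rpow_mul hs.le, mul_one_div]
    exact mul_le_of_le_one_right (by positivity)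
      (Real.exp_le_one_iff.2 (by nlinarith [mul_pos hl hb]))
  · filter_upwards [hpos] with s hs
    have hc : Continuous fun l : ℝ => (s ^ β) ^ (1 / 2 : ℝ) * Real.exp (-(l * s ^ β)) := by fun_prop
    have := (hc.tendsto 0).mono_left (nhdsWithin_le_nhds (s := Ioi 0))
    simpa [← Real.rpow_mul hs.le, div_eq_mul_inv] using this

theorem tendsto_gaussMoment_one (hβ0 : 0 < β) (hβ1 : β < 1) (hpos : ∀ᵐ s ∂μ, 0 < s)
    (hlap : ∀ r : ℝ, 0 < r → ∫ s, Real.exp (-(r * s)) ∂μ = Real.exp (-(r ^ β))) :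
    Tendsto (fun ℓ : ℝ => ℓ⁻¹ * gaussMoment β μ 1 (Real.exp (-ℓ) / 4)) atTop
      (𝓝 (1 / Real.Gamma (1 - β))) := by
  have he : Real.exp (-1) < 1 := Real.exp_lt_one_iff.2 (by norm_num)
  have := tendsto_tail_integral_log (antitone_tail (μ := μ) (β := β))
    (fun _ => measureReal_nonneg) (fun _ => measureReal_le_one)
    ((one_le_inv₀ (by linarith)).2 (by linarith [Real.exp_pos (-1)]))
    (mul_tail_le hβ0 hpos hlap) (tendsto_mul_tail hβ0 hβ1 hpos hlap)
  refine this.congr fun ℓ => ?_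
  rw [gaussMoment_eq hpos le_rfl (by positivity), Real.rpow_neg_one]
  simp

theorem tendsto_gaussMoment_high (hβ0 : 0 < β) (hβ1 : β < 1) (hpos : ∀ᵐ s ∂μ, 0 < s)
    (hlap : ∀ r : ℝ, 0 < r → ∫ s, Real.exp (-(r * s)) ∂μ = Real.exp (-(r ^ β)))
    {a : ℝ} (ha : 1 < a) :
    Tendsto (fun l : ℝ => l ^ (a - 1) * gaussMoment β μ a l) (𝓝[>] 0)
      (𝓝 (1 / Real.Gamma (1 - β) * Real.Gamma (a - 1))) := by
  have := tendsto_tail_integral_high (antitone_tail (μ := μ) (β := β))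
    (fun _ => measureReal_nonneg) (mul_tail_le hβ0 hpos hlap)
    (tendsto_mul_tail hβ0 hβ1 hpos hlap) ha
  refine this.congr' ?_
  filter_upwards [self_mem_nhdsWithin] with l hl
  have hl : 0 < l := hl
  rw [gaussMoment_eq hpos ha.le hl, ← mul_assoc, ← Real.rpow_add hl,
    show a - 1 + -a = -1 by ring, Real.rpow_neg_one]

end Moments

/-! ### The asymptotics of the heat kernel -/

theorem exists_threshold {Q : ℝ → ℝ} (hQ : Tendsto Q atTop (𝓝 1)) {ε : ℝ} (hε : 0 < ε) :
    ∃ R : ℝ, 0 < R ∧ ∀ z, R ≤ z → 1 < z ∧ |Q z - 1| ≤ ε := by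
  obtain ⟨R, hR⟩ := eventually_atTop.1 (Metric.tendsto_nhds.1 hQ ε hε)
  refine ⟨max R 2, by positivity, fun z hz => ⟨?_, ?_⟩⟩
  · linarith [le_max_right R 2]
  · exact (Real.dist_eq _ _ ▸ hR z ((le_max_left R 2).trans hz)).le

theorem tendsto_rpow_neg_div_four {β : ℝ} (hβ0 : 0 < β) :
    Tendsto (fun z : ℝ => z ^ (-β) / 4) atTop (𝓝[>] 0) := by
  refine tendsto_nhdsWithin_iff.2 ⟨?_, ?_⟩
  · simpa using (tendsto_rpow_neg_atTop hβ0).div_const 4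
  · filter_upwards [eventually_gt_atTop 0] with z hz
    exact div_pos (Real.rpow_pos_of_pos hz _) four_pos

/-- The parameter `|x - y|² / (4 t ^ β)` of the Gaussian factor, as a function of the similarity
variable `z = |x - y| ^ (-2/β) t` alone. -/
theorem similarity_rpow {β D t : ℝ} (hβ0 : 0 < β) (hD : 0 < D) (ht : 0 < t) :
    (D ^ (-(2 / β)) * t) ^ (-β) / 4 = D ^ 2 / (4 * t ^ β) := by
  rw [Real.mul_rpow (by positivity) ht.le, ← Real.rpow_mul hD.le,
    show -(2 / β) * -β = (2 : ℕ) by push_cast; field_simp, Real.rpow_natCast, Real.rpow_neg ht.le]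
  field_simp

theorem kernel_eq_gaussMoment {β : ℝ} {μ : Measure ℝ} (hpos : ∀ᵐ s ∂μ, 0 < s)
    {t : ℝ} (ht : 0 < t) (a D : ℝ) :
    ∫ s, (4 * Real.pi * (t ^ β * s ^ (-β))) ^ (-a) *
        Real.exp (-(D ^ 2 * s ^ β / (4 * t ^ β))) ∂μ =
      (4 * Real.pi * t ^ β) ^ (-a) * gaussMoment β μ a (D ^ 2 / (4 * t ^ β)) := by
  rw [gaussMoment, ← integral_const_mul]
  refine integral_congr_ae ?_
  filter_upwards [hpos] with s hs
  have hsb : 0 < s ^ β := by positivity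
  rw [← mul_assoc (4 * Real.pi), Real.mul_rpow (by positivity) (by positivity), Real.rpow_neg hs.le,
    Real.inv_rpow hsb.le, Real.rpow_neg hsb.le, inv_inv, mul_assoc,
    div_mul_eq_mul_div]

theorem stmt_7
    (β : ℝ) (hβ0 : 0 < β) (hβ1 : β < 1)
    (μ : Measure ℝ) (hprob : IsProbabilityMeasure μ)
    (hsupp : μ (Set.Iic 0) = 0)
    (hlap : ∀ r : ℝ, 0 < r →
      ∫ s in Set.Ioi (0:ℝ), Real.exp (-(r * s)) ∂μ = Real.exp (-(r ^ β)))
    (d : ℕ) (hd : 1 ≤ d)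
    (pSinv : ℝ → EuclideanSpace ℝ (Fin d) → EuclideanSpace ℝ (Fin d) → ℝ)
    (hpSinv : ∀ t : ℝ, 0 < t → ∀ x y : EuclideanSpace ℝ (Fin d),
      pSinv t x y = ∫ s in Set.Ioi (0:ℝ),
        (4 * Real.pi * (t ^ β * s ^ (-β))) ^ (-((d:ℝ)/2)) *
          Real.exp (-(dist x y ^ 2 * s ^ β / (4 * t ^ β))) ∂μ) :
    (d = 1 →
      ∀ ε : ℝ, 0 < ε → ∃ R : ℝ, 0 < R ∧ ∀ t : ℝ, 0 < t →
        ∀ x y : EuclideanSpace ℝ (Fin d), x ≠ y →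
        R ≤ dist x y ^ (-(2/β)) * t →
        |pSinv t x y / (1 / (2 * Real.Gamma (1 - β/2)) * t ^ (-(β/2))) - 1| ≤ ε) ∧
    (d = 2 →
      ∀ ε : ℝ, 0 < ε → ∃ R : ℝ, 0 < R ∧ ∀ t : ℝ, 0 < t →
        ∀ x y : EuclideanSpace ℝ (Fin d), x ≠ y →
        R ≤ dist x y ^ (-(2/β)) * t →
        |pSinv t x y /
          (β / (4 * Real.pi * Real.Gamma (1 - β)) * t ^ (-β) *
            Real.log (dist x y ^ (-(2/β)) * t)) - 1| ≤ ε) ∧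
    (3 ≤ d →
      ∀ ε : ℝ, 0 < ε → ∃ R : ℝ, 0 < R ∧ ∀ t : ℝ, 0 < t →
        ∀ x y : EuclideanSpace ℝ (Fin d), x ≠ y →
        R ≤ dist x y ^ (-(2/β)) * t →
        |pSinv t x y /
          (Real.Gamma ((d:ℝ)/2 - 1) / (4 * Real.pi ^ ((d:ℝ)/2) * Real.Gamma (1 - β)) *
            (dist x y ^ (2 - (d:ℝ)) * t ^ (-β))) - 1| ≤ ε) := by
  have hpos : ∀ᵐ s ∂μ, 0 < s := by
    rw [ae_iff]
    simp only [not_lt]; exact hsupp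
  have hres : μ.restrict (Ioi 0) = μ := Measure.restrict_eq_self_of_ae_mem hpos
  rw [hres] at hlap hpSinv
  have hker : ∀ t : ℝ, 0 < t → ∀ x y : EuclideanSpace ℝ (Fin d), x ≠ y →
      pSinv t x y = (4 * Real.pi * t ^ β) ^ (-((d : ℝ) / 2)) *
        gaussMoment β μ ((d : ℝ) / 2) ((dist x y ^ (-(2/β)) * t) ^ (-β) / 4) := by
    intro t ht x y hxy
    rw [hpSinv t ht, kernel_eq_gaussMoment hpos ht, similarity_rpow hβ0 (dist_pos.2 hxy) ht]
  have hΓ : 0 < Real.Gamma (1 - β) := Real.Gamma_pos_of_pos (by linarith)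
  have hπ := Real.pi_pos
  refine ⟨?_, ?_, ?_⟩
  · rintro hd1 ε hε
    have hΓ2 : 0 < Real.Gamma (1 - β / 2) := Real.Gamma_pos_of_pos (by linarith)
    have hQ : Tendsto (fun z : ℝ => gaussMoment β μ (1 / 2) (z ^ (-β) / 4) *
        (Real.Gamma (1 - β / 2) / √Real.pi)) atTop (𝓝 1) := by
      have := ((tendsto_gaussMoment_half hβ0 hβ1 hpos hlap).comp
        (tendsto_rpow_neg_div_four hβ0)).mul_const (Real.Gamma (1 - β / 2) / √Real.pi)
      rwa [show √Real.pi / Real.Gamma (1 - β / 2) * (Real.Gamma (1 - β / 2) / √Real.pi) = 1 by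
        rw [div_mul_div_comm, mul_comm, div_self (by positivity)]] at this
    obtain ⟨R, hR, H⟩ := exists_threshold hQ hε
    refine ⟨R, hR, fun t ht x y hxy hz => ?_⟩
    convert (H _ hz).2 using 3
    have hdc : (d : ℝ) = 1 := by exact_mod_cast hd1
    rw [hker t ht x y hxy, hdc]
    have e1 : (4 * Real.pi * t ^ β) ^ (-(1 / 2 : ℝ)) = (2 * √Real.pi * t ^ (β / 2))⁻¹ := by
      rw [Real.rpow_neg (by positivity), Real.mul_rpow (by positivity) (by positivity),
        ← Real.rpow_mul ht.le, ← Real.sqrt_eq_rpow, Real.sqrt_mul (by norm_num),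
        show (4 : ℝ) = 2 ^ 2 by norm_num, Real.sqrt_sq (by norm_num), mul_one_div]
    have htb : 0 < t ^ (β / 2) := by positivity
    rw [e1, Real.rpow_neg ht.le]
    generalize Real.Gamma (1 - β / 2) = G at hΓ2 ⊢
    field_simp
  · rintro hd2 ε hε
    have hlog : Tendsto (fun z : ℝ => β * Real.log z) atTop atTop :=
      Real.tendsto_log_atTop.const_mul_atTop hβ0
    have hQ : Tendsto (fun z : ℝ => (β * Real.log z)⁻¹ *
        gaussMoment β μ 1 (Real.exp (-(β * Real.log z)) / 4) * Real.Gamma (1 - β))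
        atTop (𝓝 1) := by
      have := ((tendsto_gaussMoment_one hβ0 hβ1 hpos hlap).comp hlog).mul_const
        (Real.Gamma (1 - β))
      rwa [one_div_mul_cancel hΓ.ne'] at this
    obtain ⟨R, hR, H⟩ := exists_threshold hQ hε
    refine ⟨R, hR, fun t ht x y hxy hz => ?_⟩
    have hz1 := (H _ hz).1
    convert (H _ hz).2 using 3
    have hdc : (d : ℝ) = 2 := by exact_mod_cast hd2
    rw [hker t ht x y hxy, hdc, div_self two_ne_zero]
    set z := dist x y ^ (-(2/β)) * t with hzdef
    have hlz : 0 < Real.log z := Real.log_pos hz1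
    have e1 : Real.exp (-(β * Real.log z)) = z ^ (-β) := by
      rw [Real.rpow_def_of_pos (by linarith)]; congr 1; ring
    have htb : 0 < t ^ β := by positivity
    rw [e1, Real.rpow_neg_one, Real.rpow_neg ht.le]
    field_simp
  · intro hd3 ε hε
    have hd3' : (3 : ℝ) ≤ d := by exact_mod_cast hd3
    set a : ℝ := (d : ℝ) / 2 with ha
    have ha1 : 1 < a := by rw [ha]; linarith
    have hΓa : 0 < Real.Gamma (a - 1) := Real.Gamma_pos_of_pos (by linarith)
    have hQ : Tendsto (fun z : ℝ => (z ^ (-β) / 4) ^ (a - 1) * gaussMoment β μ a (z ^ (-β) / 4) *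
        (Real.Gamma (1 - β) / Real.Gamma (a - 1))) atTop (𝓝 1) := by
      have := ((tendsto_gaussMoment_high hβ0 hβ1 hpos hlap ha1).comp
        (tendsto_rpow_neg_div_four hβ0)).mul_const (Real.Gamma (1 - β) / Real.Gamma (a - 1))
      rwa [show 1 / Real.Gamma (1 - β) * Real.Gamma (a - 1) *
        (Real.Gamma (1 - β) / Real.Gamma (a - 1)) = 1 by field_simp] at this
    obtain ⟨R, hR, H⟩ := exists_threshold hQ hε
    refine ⟨R, hR, fun t ht x y hxy hz => ?_⟩
    convert (H _ hz).2 using 3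
    rw [hker t ht x y hxy]
    have hD : 0 < dist x y := dist_pos.2 hxy
    have htb : 0 < t ^ β := by positivity
    have split : ∀ x : ℝ, 0 < x → x ^ a = x ^ (a - 1) * x := fun x hx => by
      rw [← Real.rpow_add_one hx.ne', sub_add_cancel]
    have e1 : dist x y ^ (2 - (d : ℝ)) = ((dist x y ^ 2) ^ (a - 1))⁻¹ := by
      rw [← Real.rpow_natCast (dist x y) 2, ← Real.rpow_mul hD.le, ← Real.rpow_neg hD.le]
      congr 1; rw [ha]; push_cast; ring
    have e2 : ((dist x y ^ (-(2/β)) * t) ^ (-β) / 4) ^ (a - 1) =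
        (dist x y ^ 2) ^ (a - 1) / (4 ^ (a - 1) * (t ^ β) ^ (a - 1)) := by
      rw [similarity_rpow hβ0 hD ht, Real.div_rpow (by positivity) (by positivity),
        Real.mul_rpow (by norm_num) htb.le]
    rw [e1, e2, Real.rpow_neg (by positivity), Real.mul_rpow (by positivity) htb.le,
      Real.mul_rpow (by norm_num) hπ.le, split 4 (by norm_num), split _ htb, Real.rpow_neg ht.le]
    have p1 : 0 < (4 : ℝ) ^ (a - 1) := by positivity
    have p2 : 0 < (t ^ β) ^ (a - 1) := by positivity
    have p3 : 0 < (dist x y ^ 2) ^ (a - 1) := by positivity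
    have p4 : 0 < Real.pi ^ a := by positivity
    field_simp
end
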